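/- arXiv:math/9802083 — 2 statements merged into one kernel-verified Lean document; each statement's English description precedes it below -/
import Mathlib

section
/- For every integer n ≥ 1 and all real numbers q, q' > 1, the concrete quantum projective space C*-algebras B_n(q) and B_n(q') are isomorphic as unital C*-algebras, i.e. there exists a unital star-algebra isomorphism (automatically isometric) B_n(q) ≅ B_n(q'). In particular the C*-algebra C(ℂP_q^n) of the standard quantum complex projective space is independent of q. -/
noncomputable section

/-- The Hilbert space `H_n = ℓ²(ℕⁿ)`. -/
abbrev Hn (n : ℕ) : Type := lp (fun _ : (Fin n → ℕ) => ℂ) 2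

/-- The standard orthonormal basis vectors `e_k`, `k ∈ ℕⁿ`, of `ℓ²(ℕⁿ)`. -/
def en {n : ℕ} (k : Fin n → ℕ) : Hn n := lp.single 2 k 1

/-- For an index `j` with `1 ≤ j+1 ≤ n` (so `w_{j+2} = γ^{⊗(n-1-j)} ⊗ α* ⊗ 1^{⊗j}`),
the (0-based) coordinate `n - 1 - j` at which the shift `α*` acts. -/
def shiftIdx {n : ℕ} (j : Fin n) : Fin n := ⟨n - 1 - (j : ℕ), by have := j.isLt; omega⟩

/-- `IsWFamily q w` says that `w 0, …, w n` are the operators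
`w_1, …, w_{n+1}` on `ℓ²(ℕⁿ)` from the paper (for the parameter `q`):
`w_1 e_k = q^{-(k_1+⋯+k_n)} e_k` and for `2 ≤ i ≤ n+1`,
`w_i e_k = q^{-(k_1+⋯+k_{n+1-i})} (1-q^{-2(k_{n+2-i}+1)})^{1/2} e_{k+δ_{n+2-i}}`.
These are the images of the generators `u_{n+1,i}` of `C(S_q^{2n+1})` (up to a circle
factor) under the faithful representation `π_{n(n-1)⋯21}∘Δ^{n-1}`. -/
def IsWFamily (q : ℝ) {n : ℕ} (w : Fin (n + 1) → (Hn n →L[ℂ] Hn n)) : Prop :=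
  (∀ k : Fin n → ℕ, w 0 (en k) = (q ^ (-(∑ m, (k m : ℤ)))) • en k) ∧
  (∀ (j : Fin n) (k : Fin n → ℕ),
    w j.succ (en k) =
      ((q ^ (-(∑ m ∈ Finset.univ.filter (fun m : Fin n => (m : ℕ) < n - 1 - (j : ℕ)), (k m : ℤ)))) *
          Real.sqrt (1 - q ^ (-2 * ((k (shiftIdx j) : ℤ) + 1)))) •
        en (Function.update k (shiftIdx j) (k (shiftIdx j) + 1)))

/-- `B_n(q)`: the unital C*-subalgebra of bounded operators on `ℓ²(ℕⁿ)` generated by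
`{w_i* w_j : 1 ≤ i, j ≤ n+1}` (the closed star-subalgebra they generate); this is the
concrete realization of the standard quantum projective space algebra `C(ℂP_q^n)`. -/
def projAlg {n : ℕ} (w : Fin (n + 1) → (Hn n →L[ℂ] Hn n)) :
    StarSubalgebra ℂ (Hn n →L[ℂ] Hn n) :=
  (StarAlgebra.adjoin ℂ
    {x : Hn n →L[ℂ] Hn n | ∃ i j : Fin (n + 1), x = star (w i) * w j}).topologicalClosure


namespace QProj

open Filter Topology

theorem diag_mem {n : ℕ} (f : (Fin n → ℕ) → ℂ) (C : ℝ) (h : ∀ k, ‖f k‖ ≤ C) (x : Hn n) :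
    Memℓp (fun k => f k * x k) 2 := by
  have := (lp.memℓp x).const_smul (C : ℂ)
  refine this.mono' fun k => ?_
  have hC : 0 ≤ C := (norm_nonneg _).trans (h k)
  simp only [Pi.smul_apply, smul_eq_mul, norm_mul, Complex.norm_real, Real.norm_eq_abs,
    abs_of_nonneg hC]
  gcongr
  exact h k

theorem diag_norm {n : ℕ} (f : (Fin n → ℕ) → ℂ) (C : ℝ) (h : ∀ k, ‖f k‖ ≤ C) (x y : Hn n)
    (hy : ∀ k, y k = f k * x k) : ‖y‖ ≤ C * ‖x‖ := by
  have hC : 0 ≤ C := (norm_nonneg _).trans (h 0)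
  have h1 : ‖y‖ ≤ ‖(C : ℂ) • x‖ := by
    refine lp.norm_le_of_forall_sum_le (by simp) (norm_nonneg _) fun s => ?_
    refine le_trans (Finset.sum_le_sum fun k _ => ?_)
      (lp.sum_rpow_le_norm_rpow (by simp) ((C : ℂ) • x) s)
    refine Real.rpow_le_rpow (norm_nonneg _) ?_ (by simp)
    rw [hy]
    simp only [lp.coeFn_smul, Pi.smul_apply, smul_eq_mul, norm_mul, Complex.norm_real,
      Real.norm_eq_abs, abs_of_nonneg hC]
    gcongr
    exact h k
  rwa [norm_smul, Complex.norm_real, Real.norm_eq_abs, abs_of_nonneg hC] at h1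

/-- Bounded diagonal operator. -/
def diag {n : ℕ} (f : (Fin n → ℕ) → ℂ) (C : ℝ) (h : ∀ k, ‖f k‖ ≤ C) : Hn n →L[ℂ] Hn n :=
  LinearMap.mkContinuous
    { toFun := fun x => ⟨fun k => f k * x k, diag_mem f C h x⟩
      map_add' := fun x y => by
        ext k
        exact mul_add _ _ _
      map_smul' := fun c x => by
        ext k
        simp [mul_left_comm] } C
    (fun x => diag_norm f C h x _ fun _ => rfl)

theorem diag_apply {n : ℕ} (f : (Fin n → ℕ) → ℂ) (C : ℝ) (h : ∀ k, ‖f k‖ ≤ C) (x : Hn n)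
    (k : Fin n → ℕ) : diag f C h x k = f k * x k := rfl

theorem en_apply {n : ℕ} (k l : Fin n → ℕ) : (en k : Hn n) l = if l = k then 1 else 0 := by
  simp [en, Pi.single_apply]

theorem diag_en {n : ℕ} (f : (Fin n → ℕ) → ℂ) (C : ℝ) (h : ∀ k, ‖f k‖ ≤ C)
    (k : Fin n → ℕ) : diag f C h (en k) = f k • en k := by
  ext l
  rw [diag_apply, lp.coeFn_smul, Pi.smul_apply, en_apply]
  split_ifs with hl
  · simp [hl]
  · simp

theorem diag_norm_le {n : ℕ} (f : (Fin n → ℕ) → ℂ) (C : ℝ) (h : ∀ k, ‖f k‖ ≤ C) :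
    ‖diag f C h‖ ≤ C := by
  refine LinearMap.mkContinuous_norm_le _ ((norm_nonneg _).trans (h 0)) _

theorem inner_en {n : ℕ} (k : Fin n → ℕ) (x : Hn n) : inner ℂ (en k) x = x k := by
  unfold en
  rw [lp.inner_single_left]
  simp

theorem ext_en {n : ℕ} {S T : Hn n →L[ℂ] Hn n} (h : ∀ k, S (en k) = T (en k)) : S = T := by
  refine lp.ext_continuousLinearMap (by simp) fun k => ?_
  ext
  simpa [en] using congrArg (fun z : Hn n => z _) (h k)

theorem star_mul_eq {n : ℕ} (T : Hn n →L[ℂ] Hn n) (σ : (Fin n → ℕ) → (Fin n → ℕ))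
    (hσ : Function.Injective σ) (d : (Fin n → ℕ) → ℝ)
    (hT : ∀ k, T (en k) = (d k : ℂ) • en (σ k)) (f : (Fin n → ℕ) → ℂ) (C : ℝ)
    (h : ∀ k, ‖f k‖ ≤ C) (hf : ∀ k, f k = ((d k ^ 2 : ℝ) : ℂ)) :
    star T * T = diag f C h := by
  refine ext_en fun k => ?_
  ext l
  rw [diag_en, ← inner_en l, mul_apply_eq_comp, ContinuousLinearMap.star_eq_adjoint,
    ContinuousLinearMap.adjoint_inner_right, hT, hT, inner_smul_left, inner_smul_right, inner_en,
    lp.coeFn_smul, Pi.smul_apply, en_apply, en_apply, hf]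
  by_cases hl : l = k
  · subst hl
    simp [sq]
  · simp [hl, hσ.eq_iff]

theorem norm_le_of {n : ℕ} (T : Hn n →L[ℂ] Hn n) (σ : (Fin n → ℕ) → (Fin n → ℕ))
    (hσ : Function.Injective σ) (d : (Fin n → ℕ) → ℝ)
    (hT : ∀ k, T (en k) = (d k : ℂ) • en (σ k)) (C : ℝ) (hC : 0 ≤ C)
    (h : ∀ k, |d k| ≤ C) : ‖T‖ ≤ C := by
  have hb : ∀ k, ‖((d k ^ 2 : ℝ) : ℂ)‖ ≤ C ^ 2 := fun k => by
    rw [Complex.norm_real, norm_pow, Real.norm_eq_abs]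
    gcongr
    exact h k
  have h1 := star_mul_eq T σ hσ d hT _ (C ^ 2) hb fun _ => rfl
  have h2 : ‖T‖ * ‖T‖ ≤ C ^ 2 := by
    rw [← CStarRing.norm_star_mul_self, h1]
    exact diag_norm_le _ _ _
  nlinarith [norm_nonneg T]

/-- The compact space. -/
abbrev K (n : ℕ) : Type := Fin (n + 1) → OnePoint ℕ

/-- Partial sums of a multi-index. -/
def psum {n : ℕ} (k : Fin n → ℕ) (m : ℕ) : ℕ :=
  ∑ i ∈ Finset.univ.filter (fun i : Fin n => (i : ℕ) < m), k i

/-- The point of the compact space given by partial sums. -/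
def pt {n : ℕ} (k : Fin n → ℕ) : K n := fun m => ((psum k m : ℕ) : OnePoint ℕ)

/-- Diagonal representation of `C(K)`. -/
def F (n : ℕ) : C(K n, ℂ) →⋆ₐ[ℂ] (Hn n →L[ℂ] Hn n) where
  toFun g := diag (fun k => g (pt k)) ‖g‖ (fun k => g.norm_coe_le_norm _)
  map_one' := by
    refine ext_en fun k => ?_
    rw [diag_en]; simp
  map_mul' g h := by
    ext x k
    simp [diag_apply, mul_assoc]
  map_zero' := by
    refine ext_en fun k => ?_
    rw [diag_en]; simp
  map_add' g h := by
    ext x k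
    simp [diag_apply, add_mul]
  commutes' c := by
    refine ext_en fun k => ?_
    rw [diag_en]; simp [Algebra.algebraMap_eq_smul_one]
  map_star' g := by
    refine ext_en fun k => ?_
    ext l
    rw [diag_en, ← inner_en l ((star (diag _ _ _) : Hn n →L[ℂ] Hn n) _), ContinuousLinearMap.star_eq_adjoint,
      ContinuousLinearMap.adjoint_inner_right, diag_en, inner_smul_left, inner_en,
      lp.coeFn_smul, Pi.smul_apply, en_apply]
    by_cases hl : l = k
    · subst hl
      simp
    · simp [hl]

theorem F_en {n : ℕ} (g : C(K n, ℂ)) (k : Fin n → ℕ) : F n g (en k) = g (pt k) • en k :=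
  diag_en (fun k => g (pt k)) ‖g‖ (fun _ => g.norm_coe_le_norm _) k

theorem F_continuous (n : ℕ) : Continuous (F n) := by
  have := fun a => NonUnitalStarAlgHom.norm_apply_le (F n) a
  refine AddMonoidHomClass.continuous_of_bound (F n) 1 (fun x => by simpa using this x)

/-- The function `q^{-2s}` on `ℕ ∪ {∞}`. -/
def ph (q : ℝ) : OnePoint ℕ → ℝ := fun s => s.elim 0 (fun j => (q⁻¹ ^ j) ^ 2)

theorem ph_coe (q : ℝ) (j : ℕ) : ph q (j : OnePoint ℕ) = (q⁻¹ ^ j) ^ 2 := rfl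

theorem ph_continuous {q : ℝ} (hq : 1 < q) : Continuous (ph q) := by
  rw [OnePoint.continuous_iff_from_nat]
  have h0 : 0 ≤ q⁻¹ := by positivity
  have h1 : q⁻¹ < 1 := inv_lt_one_of_one_lt₀ hq
  have := (tendsto_pow_atTop_nhds_zero_of_lt_one h0 h1).pow 2
  simpa [ph] using this

theorem ph_injective {q : ℝ} (hq : 1 < q) : Function.Injective (ph q) := by
  have h0 : 0 < q⁻¹ := by positivity
  have h1 : q⁻¹ < 1 := inv_lt_one_of_one_lt₀ hq
  have hi : ∀ j : ℕ, ph q (j : OnePoint ℕ) ≠ ph q OnePoint.infty := fun j => by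
    have : (0:ℝ) < (q⁻¹ ^ j) ^ 2 := by positivity
    exact this.ne'
  intro s t
  induction s using OnePoint.rec with
  | infty =>
    induction t using OnePoint.rec with
    | infty => simp
    | coe t => intro h; exact absurd h.symm (hi t)
  | coe s =>
    induction t using OnePoint.rec with
    | infty => intro h; exact absurd h (hi s)
    | coe t =>
      intro h
      rw [ph_coe, ph_coe] at h
      have h2 := (pow_left_inj₀ (by positivity) (by positivity) two_ne_zero).1 h
      rw [pow_right_injective₀ h0 h1.ne h2]

/-- coordinate functions -/
def coord {q : ℝ} (hq : 1 < q) {n : ℕ} (m : Fin (n + 1)) : C(K n, ℂ) :=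
  ⟨fun x => (ph q (x m) : ℂ), by
    have := ph_continuous hq
    fun_prop⟩

/-- If the closed star subalgebra contains all coordinate diagonals, it contains all of them. -/
theorem F_mem {q : ℝ} (hq : 1 < q) {n : ℕ} (A : StarSubalgebra ℂ (Hn n →L[ℂ] Hn n))
    (hA : IsClosed (A : Set (Hn n →L[ℂ] Hn n))) (h : ∀ m, F n (coord hq m) ∈ A) (g : C(K n, ℂ)) :
    F n g ∈ A := by
  let B : StarSubalgebra ℂ C(K n, ℂ) := A.comap (F n)
  have hB : B.SeparatesPoints := by
    intro x y hxy
    obtain ⟨m, hm⟩ := Function.ne_iff.1 hxy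
    refine ⟨_, ⟨coord hq m, h m, rfl⟩, ?_⟩
    simpa [coord] using fun e => hm (ph_injective hq e)
  have h1 := ContinuousMap.starSubalgebra_topologicalClosure_eq_top_of_separatesPoints B hB
  have h2 : IsClosed (B : Set C(K n, ℂ)) := hA.preimage (F_continuous n)
  have h3 : B.topologicalClosure ≤ B := StarSubalgebra.topologicalClosure_minimal le_rfl h2
  rw [h1] at h3
  exact h3 (StarSubalgebra.mem_top (x := g))

/-- squared amplitudes -/
def amp2 (q : ℝ) {n : ℕ} (i : Fin (n + 1)) (x : K n) : ℝ :=
  ph q (x i.rev) -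
    Fin.cases (motive := fun _ => ℝ) 0 (fun j => q⁻¹ ^ 2 * ph q (x j.castSucc.rev)) i

theorem amp2_zero (q : ℝ) {n : ℕ} (x : K n) : amp2 q 0 x = ph q (x (Fin.rev 0)) := by
  simp [amp2]

theorem amp2_succ (q : ℝ) {n : ℕ} (j : Fin n) (x : K n) :
    amp2 q j.succ x = ph q (x j.succ.rev) - q⁻¹ ^ 2 * ph q (x j.castSucc.rev) := rfl

theorem amp2_continuous {q : ℝ} (hq : 1 < q) {n : ℕ} (i : Fin (n + 1)) :
    Continuous (amp2 q i : K n → ℝ) := by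
  have := ph_continuous hq
  induction i using Fin.cases with
  | zero => simp only [funext (amp2_zero q)]; fun_prop
  | succ j => simp only [funext (amp2_succ q j)]; fun_prop

/-- shifts on multi-indices -/
def sg {n : ℕ} (i : Fin (n + 1)) : (Fin n → ℕ) → (Fin n → ℕ) :=
  Fin.cases (motive := fun _ => (Fin n → ℕ) → (Fin n → ℕ)) id
    (fun j k => Function.update k (shiftIdx j) (k (shiftIdx j) + 1)) i

theorem sg_injective {n : ℕ} (i : Fin (n + 1)) : Function.Injective (sg i) := by
  induction i using Fin.cases with
  | zero => exact Function.injective_id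
  | succ j =>
    intro k l h
    funext m
    have := congrFun h m
    simp only [sg, Fin.cases_succ] at this
    by_cases hm : m = shiftIdx j
    · subst hm
      simpa using this
    · simpa [hm] using this

theorem psum_succ {n : ℕ} (k : Fin n → ℕ) (i : Fin n) :
    psum k ((i : ℕ) + 1) = psum k i + k i := by
  unfold psum
  have : Finset.univ.filter (fun m : Fin n => (m : ℕ) < (i : ℕ) + 1) =
      insert i (Finset.univ.filter (fun m : Fin n => (m : ℕ) < (i : ℕ))) := by
    ext m
    simp [Fin.ext_iff]
    omega
  rw [this, Finset.sum_insert (by simp), add_comm]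

theorem psum_last {n : ℕ} (k : Fin n → ℕ) : psum k n = ∑ m, k m := by
  simp [psum]

theorem pt_zero {n : ℕ} (k : Fin n → ℕ) : pt k (Fin.rev 0) = ((∑ m, k m : ℕ) : OnePoint ℕ) := by
  simp [pt, psum_last]

theorem pt_succ {n : ℕ} (k : Fin n → ℕ) (j : Fin n) :
    pt k j.succ.rev = ((psum k (n - 1 - j) : ℕ) : OnePoint ℕ) := by
  have : ((j.succ.rev : Fin (n + 1)) : ℕ) = n - 1 - j := by
    rw [Fin.val_rev, Fin.val_succ]; omega
  simp only [pt, this]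

theorem pt_castSucc {n : ℕ} (k : Fin n → ℕ) (j : Fin n) :
    pt k j.castSucc.rev = ((psum k (n - 1 - j) + k (shiftIdx j) : ℕ) : OnePoint ℕ) := by
  have : ((j.castSucc.rev : Fin (n + 1)) : ℕ) = (shiftIdx j : ℕ) + 1 := by
    rw [Fin.val_rev, Fin.val_castSucc]
    simp only [shiftIdx]
    have := j.isLt
    omega
  simp only [pt, this, psum_succ]
  rfl

theorem amp2_pt_succ (q : ℝ) {n : ℕ} (j : Fin n) (k : Fin n → ℕ) :
    amp2 q j.succ (pt k) = (q⁻¹ ^ psum k (n - 1 - j)) ^ 2 *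
      (1 - (q⁻¹ ^ (k (shiftIdx j) + 1)) ^ 2) := by
  rw [amp2_succ, pt_succ, pt_castSucc, ph_coe, ph_coe]
  ring

theorem real_smul {n : ℕ} (r : ℝ) (x : Hn n) : r • x = (r : ℂ) • x := by
  ext l
  change r • x l = (r : ℂ) * x l
  rw [Complex.real_smul]

theorem zpow_conv (q : ℝ) (a : ℕ) : q ^ (-(a : ℤ)) = q⁻¹ ^ a := by
  rw [zpow_neg, zpow_natCast, inv_pow]

theorem w_en {q : ℝ} (hq : 1 < q) {n : ℕ} {w : Fin (n + 1) → (Hn n →L[ℂ] Hn n)}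
    (hw : IsWFamily q w) (i : Fin (n + 1)) (k : Fin n → ℕ) :
    w i (en k) = ((Real.sqrt (amp2 q i (pt k)) : ℝ) : ℂ) • en (sg i k) := by
  have h0 : 0 < q⁻¹ := by positivity
  induction i using Fin.cases with
  | zero =>
    rw [hw.1, real_smul, amp2_zero, pt_zero, ph_coe, Real.sqrt_sq (by positivity)]
    rw [← zpow_conv]
    push_cast
    rfl
  | succ j =>
    rw [hw.2, real_smul, amp2_pt_succ, Real.sqrt_mul (by positivity),
      Real.sqrt_sq (by positivity), ← zpow_conv]
    have e : q ^ (-2 * ((k (shiftIdx j) : ℤ) + 1)) = (q⁻¹ ^ (k (shiftIdx j) + 1)) ^ 2 := by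
      rw [← pow_mul, ← zpow_conv]
      congr 1
      push_cast
      ring
    rw [e]
    simp only [psum]
    push_cast
    rfl

theorem amp2_le {q : ℝ} (hq : 1 < q) {n : ℕ} (i : Fin (n + 1)) (k : Fin n → ℕ) :
    amp2 q i (pt k) ≤ (q⁻¹ ^ psum k i.rev) ^ 2 := by
  change _ ≤ ph q (pt k i.rev)
  induction i using Fin.cases with
  | zero => rw [amp2_zero]
  | succ j =>
    rw [amp2_pt_succ, pt_succ, ph_coe]
    have h0 : 0 < q⁻¹ := by positivity
    refine mul_le_of_le_one_right (by positivity) ?_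
    have : 0 < (q⁻¹ ^ (k (shiftIdx j) + 1)) ^ 2 := by positivity
    linarith

theorem le_amp2 {q : ℝ} (hq : 1 < q) {n : ℕ} (i : Fin (n + 1)) (k : Fin n → ℕ) :
    (q⁻¹ ^ psum k i.rev) ^ 2 * (1 - q⁻¹ ^ 2) ≤ amp2 q i (pt k) := by
  change ph q (pt k i.rev) * _ ≤ _
  have h0 : 0 < q⁻¹ := by positivity
  have h1 : q⁻¹ < 1 := inv_lt_one_of_one_lt₀ hq
  induction i using Fin.cases with
  | zero =>
    rw [amp2_zero, pt_zero, ph_coe]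
    refine mul_le_of_le_one_right (by positivity) ?_
    have : 0 < q⁻¹ ^ 2 := by positivity
    linarith
  | succ j =>
    rw [amp2_pt_succ, pt_succ, ph_coe]
    gcongr
    calc q⁻¹ ^ (k (shiftIdx j) + 1) ≤ q⁻¹ ^ 1 := pow_le_pow_of_le_one h0.le h1.le (by omega)
      _ = q⁻¹ := pow_one _

theorem amp2_nonneg {q : ℝ} (hq : 1 < q) {n : ℕ} (i : Fin (n + 1)) (k : Fin n → ℕ) :
    0 ≤ amp2 q i (pt k) := by
  refine le_trans ?_ (le_amp2 hq i k)
  have h0 : 0 < q⁻¹ := by positivity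
  have h1 : q⁻¹ < 1 := inv_lt_one_of_one_lt₀ hq
  have : 0 ≤ 1 - q⁻¹ ^ 2 := by nlinarith
  positivity

theorem isClosed_projAlg {n : ℕ} (w : Fin (n + 1) → (Hn n →L[ℂ] Hn n)) :
    IsClosed (projAlg w : Set (Hn n →L[ℂ] Hn n)) :=
  StarSubalgebra.isClosed_topologicalClosure _

theorem gen_mem {n : ℕ} (w : Fin (n + 1) → (Hn n →L[ℂ] Hn n)) (i j : Fin (n + 1)) :
    star (w i) * w j ∈ projAlg w :=
  StarSubalgebra.le_topologicalClosure _ (StarAlgebra.subset_adjoin ℂ _ ⟨i, j, rfl⟩)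

theorem star_w_mul {q : ℝ} (hq : 1 < q) {n : ℕ} {w : Fin (n + 1) → (Hn n →L[ℂ] Hn n)}
    (hw : IsWFamily q w) (i : Fin (n + 1)) (g : C(K n, ℂ))
    (hg : ∀ x, g x = (amp2 q i x : ℂ)) :
    F n g = star (w i) * w i := by
  refine (star_mul_eq (w i) (sg i) (sg_injective i) _ (w_en hq hw i)
    (fun k => g (pt k)) ‖g‖ (fun _ => g.norm_coe_le_norm _) fun k => ?_).symm
  rw [hg, Real.sq_sqrt (amp2_nonneg hq i k)]

theorem coord_mem {q : ℝ} (hq : 1 < q) {n : ℕ} {w : Fin (n + 1) → (Hn n →L[ℂ] Hn n)}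
    (hw : IsWFamily q w) (i : Fin (n + 1)) : F n (coord hq i.rev) ∈ projAlg w := by
  induction i using Fin.induction with
  | zero =>
    rw [star_w_mul hq hw 0 (coord hq (Fin.rev 0)) fun x => by rw [amp2_zero]; rfl]
    exact gen_mem w _ _
  | succ j ih =>
    have h := star_w_mul hq hw j.succ
      (coord hq j.succ.rev - ((q⁻¹ ^ 2 : ℝ) : ℂ) • coord hq j.castSucc.rev) fun x => by
        rw [amp2_succ]; simp [coord]
    have h2 : F n (coord hq j.succ.rev) = star (w j.succ) * w j.succ +
        ((q⁻¹ ^ 2 : ℝ) : ℂ) • F n (coord hq j.castSucc.rev) := by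
      rw [← h, map_sub, map_smul, sub_add_cancel]
    rw [h2]
    exact add_mem (gen_mem w _ _) (SMulMemClass.smul_mem _ ih)

theorem F_mem' {q : ℝ} (hq : 1 < q) {n : ℕ} {w : Fin (n + 1) → (Hn n →L[ℂ] Hn n)}
    (hw : IsWFamily q w) (g : C(K n, ℂ)) : F n g ∈ projAlg w :=
  F_mem hq _ (isClosed_projAlg w) (fun m => by simpa using coord_mem hq hw m.rev) g

theorem approx {q q' : ℝ} (hq : 1 < q) (hq' : 1 < q') {n : ℕ}
    {w w' : Fin (n + 1) → (Hn n →L[ℂ] Hn n)} (hw : IsWFamily q w) (hw' : IsWFamily q' w')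
    (i : Fin (n + 1)) (δ : ℝ) (hδ : 0 < δ) : ∃ g : C(K n, ℂ), ‖w' i - w i * F n g‖ ≤ δ := by
  have h0 : 0 < q⁻¹ := by positivity
  have h1 : q⁻¹ < 1 := inv_lt_one_of_one_lt₀ hq
  have h0' : 0 < q'⁻¹ := by positivity
  have h1' : q'⁻¹ < 1 := inv_lt_one_of_one_lt₀ hq'
  obtain ⟨N, hN⟩ := exists_pow_lt_of_lt_one hδ h1'
  have hc : 0 < 1 - q⁻¹ ^ 2 := by nlinarith
  set η : ℝ := q⁻¹ ^ N * Real.sqrt (1 - q⁻¹ ^ 2) with hη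
  have hη0 : 0 < η := by
    have := Real.sqrt_pos.2 hc
    positivity
  have c1 := amp2_continuous hq (n := n) i
  have c2 := amp2_continuous hq' (n := n) i
  let f : K n → ℝ := fun x => Real.sqrt (amp2 q' i x) / max (Real.sqrt (amp2 q i x)) η
  have hf : Continuous f := by
    refine Continuous.div (by fun_prop) (by fun_prop) fun x => ?_
    exact (lt_max_of_lt_right hη0).ne'
  refine ⟨⟨fun x => (f x : ℂ), by fun_prop⟩, ?_⟩
  refine norm_le_of _ (sg i) (sg_injective i)
    (fun k => Real.sqrt (amp2 q' i (pt k)) - f (pt k) * Real.sqrt (amp2 q i (pt k)))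
    (fun k => ?_) δ hδ.le fun k => ?_
  · rw [sub_apply, mul_apply_eq_comp,
      F_en, map_smul, w_en hq hw, w_en hq' hw', smul_smul, ← sub_smul]
    simp
  · simp only [f]
    set a := Real.sqrt (amp2 q i (pt k)) with ha
    set a' := Real.sqrt (amp2 q' i (pt k)) with ha'
    have ha0 : 0 ≤ a := Real.sqrt_nonneg _
    have ha0' : 0 ≤ a' := Real.sqrt_nonneg _
    rcases le_or_gt η a with h | h
    · rw [max_eq_left h, div_mul_cancel₀ _ (hη0.trans_le h).ne', sub_self, abs_zero]
      exact hδ.le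
    · rw [max_eq_right h.le]
      have hS : N < psum k i.rev := by
        by_contra! hle
        have e1 : q⁻¹ ^ N ≤ q⁻¹ ^ psum k i.rev := pow_le_pow_of_le_one h0.le h1.le hle
        have e2 : η ≤ a := by
          refine Real.le_sqrt_of_sq_le (le_trans ?_ (le_amp2 hq i k))
          rw [hη, mul_pow, Real.sq_sqrt hc.le]
          gcongr
        linarith
      have e3 : a' ≤ δ := by
        calc a' ≤ Real.sqrt ((q'⁻¹ ^ psum k i.rev) ^ 2) := Real.sqrt_le_sqrt (amp2_le hq' i k)
          _ = q'⁻¹ ^ psum k i.rev := Real.sqrt_sq (by positivity)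
          _ ≤ q'⁻¹ ^ N := pow_le_pow_of_le_one h0'.le h1'.le hS.le
          _ ≤ δ := hN.le
      have e4 : a / η ≤ 1 := (div_le_one hη0).2 h.le
      have e5 : 0 ≤ a / η := by positivity
      have e6 : a' / η * a = a' * (a / η) := by ring
      rw [e6, abs_le]
      constructor <;> nlinarith

theorem le_of {q q' : ℝ} (hq : 1 < q) (hq' : 1 < q') {n : ℕ}
    {w w' : Fin (n + 1) → (Hn n →L[ℂ] Hn n)} (hw : IsWFamily q w) (hw' : IsWFamily q' w') :
    projAlg w' ≤ projAlg w := by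
  have hcl : ∀ i, w' i ∈ closure (Set.range fun g : C(K n, ℂ) => w i * F n g) := fun i => by
    rw [Metric.mem_closure_iff]
    intro ε hε
    obtain ⟨g, hg⟩ := approx hq hq' hw hw' i (ε / 2) (by positivity)
    refine ⟨_, ⟨g, rfl⟩, ?_⟩
    rw [dist_eq_norm]
    linarith
  refine StarSubalgebra.topologicalClosure_minimal (StarAlgebra.adjoin_le ?_) (isClosed_projAlg w)
  rintro _ ⟨i, j, rfl⟩
  have hcont : Continuous (Function.uncurry fun s t : Hn n →L[ℂ] Hn n => star s * t) := by
    unfold Function.uncurry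
    fun_prop
  have := map_mem_closure₂ (u := (projAlg w : Set (Hn n →L[ℂ] Hn n))) hcont (hcl i) (hcl j) (by
    rintro _ ⟨g, rfl⟩ _ ⟨h, rfl⟩
    have e : star (w i * F n g) * (w j * F n h) =
        star (F n g) * (star (w i) * w j) * F n h := by
      simp only [star_mul, mul_assoc]
    change star (w i * F n g) * (w j * F n h) ∈ projAlg w
    rw [e]
    exact mul_mem (mul_mem (star_mem (F_mem' hq hw g)) (gen_mem w i j)) (F_mem' hq hw h))
  rwa [(isClosed_projAlg w).closure_eq] at this

end QProj

/-- For every integer `n ≥ 1` and all reals `q, q' > 1`, the concrete quantum projective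
space C*-algebras `B_n(q)` and `B_n(q')` are isomorphic as unital C*-algebras: there is a
unital star-algebra isomorphism `B_n(q) ≅ B_n(q')`.  In particular `C(ℂP_q^n)` is
independent of `q`. -/
theorem stmt_0 (n : ℕ) (hn : 1 ≤ n) (q q' : ℝ) (hq : 1 < q) (hq' : 1 < q')
    (w : Fin (n + 1) → (Hn n →L[ℂ] Hn n)) (w' : Fin (n + 1) → (Hn n →L[ℂ] Hn n))
    (hw : IsWFamily q w) (hw' : IsWFamily q' w') :
    Nonempty ((projAlg w) ≃⋆ₐ[ℂ] (projAlg w')) := by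
  have h : projAlg w = projAlg w' :=
    le_antisymm (QProj.le_of hq' hq hw' hw) (QProj.le_of hq hq' hw hw')
  rw [h]
  exact ⟨StarAlgEquiv.refl _ _⟩
end
end

section
/- For every integer k ≥ 1 and every real q > 1: (a) every compact operator on H_k belongs to B_k(q); and (b) there exists a surjective unital *-homomorphism φ : B_k(q) → B_{k−1}(q) whose kernel is exactly the set K(H_k) of compact operators on H_k. Equivalently, there is a short exact sequence of C*-algebras 0 → K → C(ℂP_q^k) → C(ℂP_q^{k−1}) → 0, where C(ℂP_q^0) ≅ ℂ. -/
noncomputable section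

open Filter Topology InnerProductSpace ContinuousLinearMap
noncomputable section

lemma pyth_sum {E ι : Type*} [NormedAddCommGroup E] [InnerProductSpace ℂ E] (F : Finset ι)
    (u : ι → E) (h : ∀ i j, i ≠ j → inner ℂ (u i) (u j) = 0) :
    ‖∑ i ∈ F, u i‖ ^ 2 = ∑ i ∈ F, ‖u i‖ ^ 2 := by
  classical
  induction F using Finset.induction_on with
  | empty => simp
  | insert a s ha ih =>
    rw [Finset.sum_insert ha, Finset.sum_insert ha, ← ih]
    have : inner ℂ (u a) (∑ i ∈ s, u i) = 0 := by
      rw [inner_sum]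
      apply Finset.sum_eq_zero
      intro i hi
      exact h _ _ (fun e => ha (e ▸ hi))
    have := norm_add_sq_eq_norm_sq_add_norm_sq_of_inner_eq_zero _ _ this
    nlinarith [this]

lemma orth_bound {E E' ι : Type*} [NormedAddCommGroup E] [InnerProductSpace ℂ E]
    [NormedAddCommGroup E'] [InnerProductSpace ℂ E'] (A : E →L[ℂ] E') (F : Finset ι)
    (u : ι → E) (h : ∀ i j, i ≠ j → inner ℂ (u i) (u j) = 0)
    (h' : ∀ i j, i ≠ j → inner ℂ (A (u i)) (A (u j)) = 0) (C : ℝ) (hC : 0 ≤ C)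
    (hb : ∀ i, ‖A (u i)‖ ≤ C * ‖u i‖) :
    ‖A (∑ i ∈ F, u i)‖ ≤ C * ‖∑ i ∈ F, u i‖ := by
  rw [map_sum]
  refine (sq_le_sq₀ (by positivity) (by positivity)).1 ?_
  rw [mul_pow, pyth_sum F u h, pyth_sum F (fun i => A (u i)) h', Finset.mul_sum]
  apply Finset.sum_le_sum
  intro i _
  rw [← mul_pow]
  exact pow_le_pow_left₀ (norm_nonneg _) (hb i) 2

lemma inner_en {n : ℕ} (k : Fin n → ℕ) (v : Hn n) : inner ℂ (en k) v = v k := by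
  rw [en, lp.inner_single_left]; simp

lemma en_apply {n : ℕ} (k l : Fin n → ℕ) : (en k : Hn n) l = if l = k then 1 else 0 := by
  rw [en, lp.single_apply, Pi.single_apply]

lemma inner_en_en {n : ℕ} (k l : Fin n → ℕ) :
    inner ℂ (en k : Hn n) (en l) = if k = l then 1 else 0 := by
  rw [inner_en, en_apply]

lemma norm_en {n : ℕ} (k : Fin n → ℕ) : ‖(en k : Hn n)‖ = 1 := by
  have := inner_self_eq_norm_sq_to_K (𝕜 := ℂ) (en k : Hn n)
  rw [inner_en_en] at this
  simp only [if_true] at this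
  have h2 : ‖(en k : Hn n)‖ ^ 2 = 1 := by
    have h3 : ((‖(en k : Hn n)‖ ^ 2 : ℝ) : ℂ) = ((1 : ℝ) : ℂ) := by
      push_cast; exact this.symm
    exact Complex.ofReal_injective h3
  nlinarith [norm_nonneg (en k : Hn n)]

lemma hasSum_en {n : ℕ} (v : Hn n) : HasSum (fun k => v k • (en k : Hn n)) v := by
  have := lp.hasSum_single (p := 2) (by norm_num) v
  convert this using 2 with k
  rw [en, ← lp.single_smul]; simp

lemma clm_ext {n : ℕ} {E : Type*} [NormedAddCommGroup E] [NormedSpace ℂ E]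
    {A B : Hn n →L[ℂ] E} (h : ∀ k, A (en k) = B (en k)) : A = B := by
  ext v
  have h1 := (hasSum_en v).mapL A
  have h2 := (hasSum_en v).mapL B
  simp only [map_smul, h] at h1 h2
  exact h1.unique h2

lemma norm_le_of_orth {n : ℕ} {E : Type*} [NormedAddCommGroup E] [InnerProductSpace ℂ E]
    (A : Hn n →L[ℂ] E) (C : ℝ) (hC : 0 ≤ C)
    (h : ∀ k l, k ≠ l → inner ℂ (A (en k)) (A (en l)) = 0)
    (hb : ∀ k, ‖A (en k)‖ ≤ C) : ‖A‖ ≤ C := by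
  refine A.opNorm_le_bound hC fun v => ?_
  have h1 : Tendsto (fun F : Finset (Fin n → ℕ) => ‖A (∑ k ∈ F, v k • (en k : Hn n))‖)
      atTop (𝓝 ‖A v‖) :=
    ((A.continuous.tendsto _).comp (hasSum_en v)).norm
  have h2 : Tendsto (fun F : Finset (Fin n → ℕ) => C * ‖(∑ k ∈ F, v k • (en k : Hn n))‖)
      atTop (𝓝 (C * ‖v‖)) := Tendsto.const_mul _ (Tendsto.norm (hasSum_en v))
  refine le_of_tendsto_of_tendsto' h1 h2 fun F => ?_
  apply orth_bound A F _ _ _ C hC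
  · intro i
    rw [map_smul, norm_smul, norm_smul, norm_en, mul_one, mul_comm]
    exact mul_le_mul_of_nonneg_right (hb i) (norm_nonneg _)
  · intro i j hij
    rw [inner_smul_left, inner_smul_right, inner_en_en, if_neg hij]; simp
  · intro i j hij
    rw [map_smul, map_smul, inner_smul_left, inner_smul_right, h _ _ hij]; simp

/-- matrix units -/
def EE {m n : ℕ} (k : Fin m → ℕ) (l : Fin n → ℕ) : Hn n →L[ℂ] Hn m := rankOne ℂ (en k) (en l)

lemma EE_apply {m n : ℕ} (k : Fin m → ℕ) (l : Fin n → ℕ) (v : Hn n) :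
    EE k l v = v l • en k := by
  rw [EE, rankOne_apply, inner_en]

lemma EE_en {m n : ℕ} (k : Fin m → ℕ) (l j : Fin n → ℕ) :
    EE k l (en j) = if l = j then en k else (0 : Hn m) := by
  rw [EE_apply, en_apply]; split_ifs <;> simp

lemma EE_adj {m n : ℕ} (k : Fin m → ℕ) (l : Fin n → ℕ) : adjoint (EE k l) = EE l k := by
  rw [EE, adjoint_rankOne]; rfl

/-- degree -/
def dg {n : ℕ} (k : Fin n → ℕ) : ℕ := ∑ m, k m

def lev (n d : ℕ) : Finset (Fin n → ℕ) := Finset.Nat.antidiagonalTuple n d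

lemma mem_lev {n d : ℕ} {k : Fin n → ℕ} : k ∈ lev n d ↔ dg k = d := by
  rw [lev, Finset.Nat.mem_antidiagonalTuple]; rfl

def QQ (n d : ℕ) : Hn n →L[ℂ] Hn n := ∑ k ∈ lev n d, EE k k

def TT (n M : ℕ) : Hn n →L[ℂ] Hn n := ∑ d ∈ Finset.range M, QQ n d

def VV (n d : ℕ) : Hn n →L[ℂ] Hn (n+1) := ∑ k ∈ lev (n+1) d, EE k (Fin.init k)

lemma QQ_en {n : ℕ} (d : ℕ) (k : Fin n → ℕ) :
    QQ n d (en k) = if dg k = d then en k else 0 := by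
  rw [QQ, sum_apply]
  simp only [EE_en, Finset.sum_ite_eq', mem_lev]

lemma TT_en {n : ℕ} (M : ℕ) (k : Fin n → ℕ) :
    TT n M (en k) = if dg k < M then en k else 0 := by
  rw [TT, sum_apply]
  simp only [QQ_en, Finset.sum_ite_eq, Finset.mem_range]

lemma VVadj_en {n : ℕ} (d : ℕ) (k : Fin (n+1) → ℕ) :
    adjoint (VV n d) (en k) = if dg k = d then en (Fin.init k) else 0 := by
  rw [VV, map_sum, sum_apply]
  simp only [EE_adj, EE_en, Finset.sum_ite_eq', mem_lev]

lemma dg_snoc {n : ℕ} (k : Fin n → ℕ) (a : ℕ) :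
    dg (Fin.snoc k a : Fin (n+1) → ℕ) = dg k + a := by
  simp [dg, Fin.sum_univ_castSucc]

lemma dg_init {n : ℕ} (k : Fin (n+1) → ℕ) : dg k = dg (Fin.init k) + k (Fin.last n) := by
  rw [← dg_snoc, Fin.snoc_init_self]

/-- embedding of index -/
def sn {n : ℕ} (k : Fin n → ℕ) (a : ℕ) : Fin (n+1) → ℕ := Fin.snoc k a

lemma dg_sn {n : ℕ} (k : Fin n → ℕ) (a : ℕ) : dg (sn k a) = dg k + a := dg_snoc k a

lemma init_sn {n : ℕ} (k : Fin n → ℕ) (a : ℕ) : Fin.init (sn k a) = k := by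
  simp [sn]

lemma sn_inj {n : ℕ} {k l : Fin n → ℕ} {a b : ℕ} (h : sn k a = sn l b) : k = l ∧ a = b := by
  constructor
  · rw [← init_sn k a, h, init_sn]
  · have := congrFun h (Fin.last n); simpa [sn] using this

lemma VV_en {n : ℕ} (d : ℕ) (k : Fin n → ℕ) :
    VV n d (en k) = if dg k ≤ d then en (sn k (d - dg k)) else 0 := by
  rw [VV, sum_apply]
  simp only [EE_en]
  rw [← Finset.sum_filter]
  split_ifs with h
  · rw [Finset.sum_eq_single (sn k (d - dg k))]
    · intro b hb hb'
      exfalso; apply hb'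
      simp only [Finset.mem_filter, mem_lev] at hb
      have h1 := dg_init b
      rw [hb.1, hb.2] at h1
      rw [← Fin.snoc_init_self b, hb.2, sn]
      congr 1
      omega
    · intro hh
      exfalso; apply hh
      simp only [Finset.mem_filter, mem_lev]
      refine ⟨?_, init_sn _ _⟩
      rw [dg_sn]; omega
  · apply Finset.sum_eq_zero
    intro b hb
    simp only [Finset.mem_filter, mem_lev] at hb
    have h1 := dg_init b
    rw [hb.1, hb.2] at h1
    omega

lemma VV_norm (n d : ℕ) : ‖VV n d‖ ≤ 1 := by
  apply norm_le_of_orth _ _ zero_le_one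
  · intro k l hkl
    rw [VV_en, VV_en]
    split_ifs <;> try simp
    rw [inner_en_en, if_neg]
    intro h; exact hkl (sn_inj h).1
  · intro k
    rw [VV_en]; split_ifs <;> simp [norm_en]

lemma VVadj_norm (n d : ℕ) : ‖adjoint (VV n d)‖ ≤ 1 := by
  rw [LinearIsometryEquiv.norm_map]; exact VV_norm n d

lemma TT_norm (n d : ℕ) : ‖TT n d‖ ≤ 1 := by
  apply norm_le_of_orth _ _ zero_le_one
  · intro k l hkl
    rw [TT_en, TT_en]
    split_ifs <;> try simp
    rw [inner_en_en, if_neg hkl]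
  · intro k
    rw [TT_en]; split_ifs <;> simp [norm_en]

lemma QQ_eq (n d : ℕ) : VV n d ∘L adjoint (VV n d) = QQ (n+1) d := by
  apply clm_ext; intro k
  rw [QQ_en]
  show VV n d (adjoint (VV n d) (en k)) = _
  rw [VVadj_en]
  split_ifs with h
  · rw [VV_en, if_pos]
    · congr 1
      rw [dg_init] at h
      conv_rhs => rw [← Fin.snoc_init_self k]
      rw [sn]; congr 1; omega
    · rw [dg_init] at h; omega
  · simp

lemma VadjV (n d : ℕ) : adjoint (VV n d) ∘L VV n d = TT n (d+1) := by
  apply clm_ext; intro k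
  rw [TT_en]
  show adjoint (VV n d) (VV n d (en k)) = _
  rw [VV_en]
  split_ifs with h h' h'
  · rw [VVadj_en, init_sn, dg_sn, if_pos (by omega)]
  · omega
  · omega
  · simp

lemma QQ_adj (n d : ℕ) : adjoint (QQ n d) = QQ n d := by
  rw [QQ, map_sum]; simp only [EE_adj]

lemma TT_tendsto {n : ℕ} (v : Hn n) : Tendsto (fun M => TT n M v) atTop (𝓝 v) := by
  have hm : Tendsto (fun M => (Finset.range M).biUnion (lev n)) atTop atTop := by
    apply tendsto_atTop_finset_of_monotone
    · intro a b hab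
      exact Finset.biUnion_subset_biUnion_of_subset_left _ (by simpa using hab)
    · intro k
      refine ⟨dg k + 1, ?_⟩
      simp [mem_lev]
  have := Tendsto.comp (hasSum_en v) hm
  refine this.congr fun M => ?_
  simp only [Function.comp]
  rw [Finset.sum_biUnion, TT, sum_apply]
  · simp only [QQ, sum_apply, EE_apply]
  · intro a _ b _ hab
    rw [Function.onFun, Finset.disjoint_left]
    intro x hx hx'
    rw [mem_lev] at hx hx'
    exact hab (hx.symm.trans hx')

/-- block bound -/
lemma block_bound {n : ℕ} (D : Hn n →L[ℂ] Hn n) (m : ℕ) (hD : ∀ d, D * QQ n d = QQ n d * D)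
    (C : ℝ) (hC : 0 ≤ C) (hb : ∀ d, m ≤ d → ‖D * QQ n d‖ ≤ C) :
    ‖D * (1 - TT n m)‖ ≤ C := by
  set A := D * (1 - TT n m) with hA
  have hQQ : ∀ d, QQ n d * QQ n d = QQ n d := by
    intro d; apply clm_ext; intro k
    show QQ n d (QQ n d (en k)) = QQ n d (en k)
    rw [QQ_en]; split_ifs with h
    · rw [QQ_en, if_pos h]
    · simp
  have hQQ' : ∀ d d', d ≠ d' → QQ n d * QQ n d' = 0 := by
    intro d d' hd; apply clm_ext; intro k
    show QQ n d (QQ n d' (en k)) = 0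
    rw [QQ_en]; split_ifs with h
    · rw [QQ_en, if_neg (by omega)]
    · simp
  have hTQ : ∀ d, (1 - TT n m) * QQ n d = if m ≤ d then QQ n d else 0 := by
    intro d; apply clm_ext; intro k
    show QQ n d (en k) - TT n m (QQ n d (en k)) = _
    rw [QQ_en]; split_ifs with h h'
    · rw [TT_en, if_neg (by omega), QQ_en, if_pos h]; simp
    · rw [TT_en, if_pos (by omega)]; simp
    · rw [QQ_en, if_neg h]; simp
    · simp
  have hAQ : ∀ d, A * QQ n d = if m ≤ d then D * QQ n d else 0 := by
    intro d; rw [hA, mul_assoc, hTQ]; split_ifs <;> simp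
  have hin : ∀ d d', d ≠ d' → ∀ u v, inner ℂ (QQ n d u) (QQ n d' v) = 0 := by
    intro d d' h u v
    rw [← adjoint_inner_right, QQ_adj]
    have : QQ n d (QQ n d' v) = 0 := by
      have := congrArg (fun T => T v) (hQQ' d d' h)
      simpa using this
    rw [this]; simp
  refine A.opNorm_le_bound hC fun v => ?_
  have h1 : Tendsto (fun M => ‖A (TT n M v)‖) atTop (𝓝 ‖A v‖) :=
    ((A.continuous.tendsto _).comp (TT_tendsto v)).norm
  have h2 : Tendsto (fun M => C * ‖TT n M v‖) atTop (𝓝 (C * ‖v‖)) :=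
    Tendsto.const_mul _ (Tendsto.norm (TT_tendsto v))
  refine le_of_tendsto_of_tendsto' h1 h2 fun M => ?_
  rw [TT, sum_apply]
  apply orth_bound A _ _ _ _ C hC
  · intro d
    have e : A (QQ n d v) = (A * QQ n d) (QQ n d v) := by
      show _ = A (QQ n d (QQ n d v))
      have := congrArg (fun T => T v) (hQQ d)
      rw [show QQ n d (QQ n d v) = QQ n d v from this]
    rw [e, hAQ]
    split_ifs with h
    · exact le_of_opNorm_le _ (hb d h) _
    · simpa using by positivity
  · intro i j hij; exact hin _ _ hij _ _
  · intro i j hij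
    have e : ∀ d, ∃ u, A (QQ n d v) = QQ n d u := by
      intro d
      rw [show A (QQ n d v) = (A * QQ n d) v from rfl, hAQ]
      split_ifs
      · exact ⟨D v, by rw [hD]; rfl⟩
      · exact ⟨0, by simp⟩
    obtain ⟨u, hu⟩ := e i
    obtain ⟨u', hu'⟩ := e j
    rw [hu, hu']; exact hin _ _ hij _ _
end
open Filter Topology InnerProductSpace ContinuousLinearMap
noncomputable section

def KS (n : ℕ) : Submodule ℂ (Hn n →L[ℂ] Hn n) :=
  Submodule.span ℂ (Set.range fun p : (Fin n → ℕ) × (Fin n → ℕ) => EE p.1 p.2)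

def KK (n : ℕ) : Submodule ℂ (Hn n →L[ℂ] Hn n) := (KS n).topologicalClosure

lemma EE_mem_KS {n : ℕ} (k l : Fin n → ℕ) : EE k l ∈ KS n :=
  Submodule.subset_span ⟨(k, l), rfl⟩

lemma EE_mem_KK {n : ℕ} (k l : Fin n → ℕ) : EE k l ∈ KK n :=
  (KS n).le_topologicalClosure (EE_mem_KS k l)

lemma KK_closed (n : ℕ) : IsClosed (KK n : Set (Hn n →L[ℂ] Hn n)) :=
  (KS n).isClosed_topologicalClosure

lemma EE_compact {m n : ℕ} (k : Fin m → ℕ) (l : Fin n → ℕ) :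
    IsCompactOperator (EE k l) := by
  have h : IsCompactOperator (innerSL ℂ (en l : Hn n)) :=
    isCompactOperator_of_locallyCompactSpace_dom (innerSL ℂ (en l : Hn n))
  exact h.clm_comp (toSpanSingleton ℂ (en k : Hn m))

lemma KK_compact {n : ℕ} {T : Hn n →L[ℂ] Hn n} (h : T ∈ KK n) : IsCompactOperator T := by
  have h1 : KS n ≤ compactOperator (RingHom.id ℂ) (Hn n) (Hn n) := by
    rw [KS, Submodule.span_le]
    rintro _ ⟨p, rfl⟩
    exact EE_compact _ _
  have h2 : KK n ≤ _ := Submodule.topologicalClosure_minimal _ h1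
    (isClosed_setOfPred_isCompactOperator)
  exact h2 h

lemma rank_mem {n : ℕ} (k : Fin n → ℕ) (v : Hn n) : rankOne ℂ (en k : Hn n) v ∈ KK n := by
  have h := (hasSum_en v).mapL (rankOne ℂ (en k : Hn n))
  refine (KK_closed n).mem_of_tendsto h (Eventually.of_forall fun F => ?_)
  refine Submodule.sum_mem _ fun l _ => ?_
  rw [map_smulₛₗ]
  exact Submodule.smul_mem _ _ (EE_mem_KK k l)

lemma EE_comp {m n : ℕ} (k : Fin m → ℕ) (l : Fin n → ℕ) (T : Hn n →L[ℂ] Hn n) :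
    EE k l ∘L T = rankOne ℂ (en k : Hn m) (adjoint T (en l)) := by
  rw [EE, rankOne_comp]

lemma TT_mul_mem {n : ℕ} (M : ℕ) (T : Hn n →L[ℂ] Hn n) : TT n M * T ∈ KK n := by
  simp only [TT, QQ, Finset.sum_mul]
  refine Submodule.sum_mem _ fun d _ => Submodule.sum_mem _ fun l _ => ?_
  rw [mul_def, EE_comp]
  exact rank_mem _ _

lemma compact_KK {n : ℕ} {T : Hn n →L[ℂ] Hn n} (h : IsCompactOperator T) : T ∈ KK n := by
  have hT : Tendsto (fun M => TT n M * T) atTop (𝓝 T) := by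
    rw [Metric.tendsto_atTop]
    intro ε hε
    have hc := h.isCompact_closure_image_closedBall (𝕜₁ := ℂ) (f := T.toLinearMap) 1
    have htb := hc.totallyBounded
    rw [Metric.totallyBounded_iff] at htb
    obtain ⟨t, htf, ht⟩ := htb (ε / 6) (by positivity)
    have hev : ∀ᶠ M in atTop, ∀ y ∈ t, ‖TT n M y - y‖ < ε / 6 := by
      rw [eventually_all_finite htf]
      intro y _
      have := TT_tendsto y
      rw [tendsto_iff_norm_sub_tendsto_zero] at this
      exact this.eventually_lt_const (by positivity)
    obtain ⟨M, hM⟩ := eventually_atTop.1 hev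
    refine ⟨M, fun m hm => ?_⟩
    rw [dist_eq_norm]
    refine lt_of_le_of_lt (b := ε / 2) ?_ (by linarith)
    refine opNorm_le_of_unit_norm (by positivity) fun x hx => ?_
    have hxm : T x ∈ closure (T.toLinearMap '' Metric.closedBall 0 1) :=
      subset_closure ⟨x, by simp [hx], rfl⟩
    obtain ⟨y, hy, hxy⟩ := Set.mem_iUnion₂.1 (ht hxm)
    rw [Metric.mem_ball, dist_eq_norm] at hxy
    have e : (TT n m * T - T) x = TT n m (T x - y) + (TT n m y - y) - (T x - y) := by
      simp only [sub_apply, map_sub]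
      show TT n m (T x) - T x = _
      abel
    rw [e]
    have h1 : ‖TT n m (T x - y)‖ ≤ 1 * ‖T x - y‖ := le_of_opNorm_le _ (TT_norm n m) _
    have h2 := hM m hm y hy
    have h3 := norm_sub_le (TT n m (T x - y) + (TT n m y - y)) (T x - y)
    have h4 := norm_add_le (TT n m (T x - y)) (TT n m y - y)
    linarith
  exact (KK_closed n).mem_of_tendsto hT (Eventually.of_forall fun M => TT_mul_mem M T)

lemma KK_iff {n : ℕ} {T : Hn n →L[ℂ] Hn n} : IsCompactOperator T ↔ T ∈ KK n :=
  ⟨compact_KK, KK_compact⟩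

lemma KK_mul_right {n : ℕ} {T : Hn n →L[ℂ] Hn n} (h : T ∈ KK n) (A : Hn n →L[ℂ] Hn n) :
    T * A ∈ KK n := by
  rw [← KK_iff] at *; exact h.comp_clm A

lemma KK_mul_left {n : ℕ} {T : Hn n →L[ℂ] Hn n} (h : T ∈ KK n) (A : Hn n →L[ℂ] Hn n) :
    A * T ∈ KK n := by
  rw [← KK_iff] at *; exact h.clm_comp A

lemma KK_star {n : ℕ} {T : Hn n →L[ℂ] Hn n} (h : T ∈ KK n) : star T ∈ KK n := by
  refine map_mem_closure (s := (KS n : Set (Hn n →L[ℂ] Hn n))) continuous_star h fun y hy => ?_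
  rw [SetLike.mem_coe] at *
  induction hy using Submodule.span_induction with
  | mem x hx =>
    obtain ⟨p, rfl⟩ := hx
    rw [star_eq_adjoint, EE_adj]; exact EE_mem_KS _ _
  | zero => simp
  | add x y _ _ hx hy => rw [star_add]; exact Submodule.add_mem _ hx hy
  | smul a x _ hx => rw [star_smul]; exact Submodule.smul_mem _ _ hx

/-- asymptotic intertwining -/
def ARel {n : ℕ} (x : Hn (n+1) →L[ℂ] Hn (n+1)) (y : Hn n →L[ℂ] Hn n) : Prop :=
  Tendsto (fun d => ‖x ∘L VV n d - VV n d ∘L y‖) atTop (𝓝 0)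

lemma rel_of_approx {n : ℕ} {x : Hn (n+1) →L[ℂ] Hn (n+1)} {y : Hn n →L[ℂ] Hn n}
    (h : ∀ ε > 0, ∃ x' y', ‖x - x'‖ ≤ ε ∧ ‖y - y'‖ ≤ ε ∧ ARel x' y') : ARel x y := by
  rw [ARel, Metric.tendsto_atTop]
  intro ε hε
  obtain ⟨x', y', hx, hy, hr⟩ := h (ε / 4) (by positivity)
  rw [ARel, Metric.tendsto_atTop] at hr
  obtain ⟨N, hN⟩ := hr (ε / 4) (by positivity)
  refine ⟨N, fun d hd => ?_⟩
  have h1 := hN d hd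
  rw [Real.dist_0_eq_abs, abs_norm] at *
  have e : x ∘L VV n d - VV n d ∘L y = (x - x') ∘L VV n d +
      (x' ∘L VV n d - VV n d ∘L y') - VV n d ∘L (y - y') := by
    rw [sub_comp, comp_sub]; abel
  rw [e]
  have h2 := norm_sub_le ((x - x') ∘L VV n d + (x' ∘L VV n d - VV n d ∘L y')) (VV n d ∘L (y - y'))
  have h3 := norm_add_le ((x - x') ∘L VV n d) (x' ∘L VV n d - VV n d ∘L y')
  have h4 : ‖(x - x') ∘L VV n d‖ ≤ ε / 4 := by
    refine (opNorm_comp_le _ _).trans ?_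
    nlinarith [VV_norm n d, norm_nonneg (VV n d), norm_nonneg (x - x')]
  have h5 : ‖VV n d ∘L (y - y')‖ ≤ ε / 4 := by
    refine (opNorm_comp_le _ _).trans ?_
    nlinarith [VV_norm n d, norm_nonneg (VV n d), norm_nonneg (y - y')]
  linarith

lemma ARel.of_bound {n : ℕ} {x : Hn (n+1) →L[ℂ] Hn (n+1)} {y : Hn n →L[ℂ] Hn n}
    {f : ℕ → ℝ} (h : ∀ d, ‖x ∘L VV n d - VV n d ∘L y‖ ≤ f d) (hf : Tendsto f atTop (𝓝 0)) :
    ARel x y := squeeze_zero (fun _ => norm_nonneg _) h hf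

lemma ARel.add {n : ℕ} {x x' : Hn (n+1) →L[ℂ] Hn (n+1)} {y y' : Hn n →L[ℂ] Hn n}
    (h : ARel x y) (h' : ARel x' y') : ARel (x + x') (y + y') := by
  refine ARel.of_bound (f := fun d => ‖x ∘L VV n d - VV n d ∘L y‖ +
    ‖x' ∘L VV n d - VV n d ∘L y'‖) (fun d => ?_) (by simpa using Tendsto.add h h')
  refine le_trans (le_of_eq ?_) (norm_add_le _ _)
  congr 1
  rw [add_comp, comp_add]; abel

lemma ARel.smul {n : ℕ} {x : Hn (n+1) →L[ℂ] Hn (n+1)} {y : Hn n →L[ℂ] Hn n}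
    (h : ARel x y) (c : ℂ) : ARel (c • x) (c • y) := by
  refine ARel.of_bound (f := fun d => ‖c‖ * ‖x ∘L VV n d - VV n d ∘L y‖)
    (fun d => ?_) (by simpa using Tendsto.const_mul ‖c‖ h)
  rw [← norm_smul, smul_sub, smul_comp, comp_smul]

lemma ARel.sub {n : ℕ} {x x' : Hn (n+1) →L[ℂ] Hn (n+1)} {y y' : Hn n →L[ℂ] Hn n}
    (h : ARel x y) (h' : ARel x' y') : ARel (x - x') (y - y') := by
  have := h.add (h'.smul (-1))
  simpa [sub_eq_add_neg] using this

lemma ARel.mul {n : ℕ} {x x' : Hn (n+1) →L[ℂ] Hn (n+1)} {y y' : Hn n →L[ℂ] Hn n}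
    (h : ARel x y) (h' : ARel x' y') : ARel (x * x') (y * y') := by
  refine ARel.of_bound (f := fun d => ‖x‖ * ‖x' ∘L VV n d - VV n d ∘L y'‖ +
    ‖x ∘L VV n d - VV n d ∘L y‖ * ‖y'‖) (fun d => ?_)
    (by simpa using (Tendsto.const_mul ‖x‖ h').add (Tendsto.mul_const ‖y'‖ h))
  have e : (x * x') ∘L VV n d - VV n d ∘L (y * y') = x ∘L (x' ∘L VV n d - VV n d ∘L y') +
      (x ∘L VV n d - VV n d ∘L y) ∘L y' := by
    rw [comp_sub, sub_comp, mul_def, mul_def]; simp only [comp_assoc]; abel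
  rw [e]
  exact (norm_add_le _ _).trans (add_le_add (opNorm_comp_le _ _) (opNorm_comp_le _ _))

lemma ARel.one {n : ℕ} : ARel (1 : Hn (n+1) →L[ℂ] Hn (n+1)) (1 : Hn n →L[ℂ] Hn n) := by
  refine ARel.of_bound (f := fun _ => 0) (fun d => ?_) tendsto_const_nhds
  have : (1 : Hn (n+1) →L[ℂ] Hn (n+1)) ∘L VV n d - VV n d ∘L (1 : Hn n →L[ℂ] Hn n) = 0 := by
    ext v; simp
  rw [this, norm_zero]

lemma ARel.zero {n : ℕ} : ARel (0 : Hn (n+1) →L[ℂ] Hn (n+1)) (0 : Hn n →L[ℂ] Hn n) := by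
  simpa using (ARel.one (n := n)).smul 0

lemma ARel.norm_le {n : ℕ} {x : Hn (n+1) →L[ℂ] Hn (n+1)} {y : Hn n →L[ℂ] Hn n}
    (h : ARel x y) : ‖y‖ ≤ ‖x‖ := by
  refine y.opNorm_le_bound (norm_nonneg _) fun v => ?_
  have h1 : Tendsto (fun d => ‖TT n (d+1) (y v)‖) atTop (𝓝 ‖y v‖) :=
    ((TT_tendsto (y v)).comp (tendsto_add_atTop_nat 1)).norm
  have h2 : Tendsto (fun d => ‖x‖ * ‖v‖ + ‖x ∘L VV n d - VV n d ∘L y‖ * ‖v‖) atTop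
      (𝓝 (‖x‖ * ‖v‖)) := by
    simpa using (Tendsto.mul_const ‖v‖ h).const_add (‖x‖ * ‖v‖)
  refine le_of_tendsto_of_tendsto' h1 h2 fun d => ?_
  rw [← VadjV]
  have a1 : ‖adjoint (VV n d) (VV n d (y v))‖ ≤ 1 * ‖VV n d (y v)‖ :=
    le_of_opNorm_le _ (VVadj_norm n d) _
  have a2 : VV n d (y v) = x (VV n d v) - (x ∘L VV n d - VV n d ∘L y) v := by
    simp
  have a3 := norm_sub_le (x (VV n d v)) ((x ∘L VV n d - VV n d ∘L y) v)
  have a4 := (x ∘L VV n d - VV n d ∘L y).le_opNorm v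
  have a5 : ‖VV n d v‖ ≤ 1 * ‖v‖ := le_of_opNorm_le _ (VV_norm n d) _
  have a6 : ‖x (VV n d v)‖ ≤ ‖x‖ * ‖v‖ :=
    (x.le_opNorm _).trans (mul_le_mul_of_nonneg_left (by linarith) (norm_nonneg _))
  rw [← a2] at a3
  rw [comp_apply]
  linarith

lemma ARel.unique {n : ℕ} {x : Hn (n+1) →L[ℂ] Hn (n+1)} {y y' : Hn n →L[ℂ] Hn n}
    (h : ARel x y) (h' : ARel x y') : y = y' := by
  have := (h.sub h').norm_le
  rw [sub_self, norm_zero] at this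
  exact sub_eq_zero.1 (norm_le_zero_iff.1 this)

lemma KK_rel {n : ℕ} {K : Hn (n+1) →L[ℂ] Hn (n+1)} (h : K ∈ KK (n+1)) : ARel K 0 := by
  apply rel_of_approx
  intro ε hε
  obtain ⟨k, hk, hkd⟩ := Metric.mem_closure_iff.1
    (show K ∈ closure (KS (n+1) : Set (Hn (n+1) →L[ℂ] Hn (n+1))) from h) ε hε
  refine ⟨k, 0, ?_, by simpa using hε.le, ?_⟩
  · rw [← dist_eq_norm]; exact hkd.le
  rw [SetLike.mem_coe] at hk
  clear hkd h
  induction hk using Submodule.span_induction with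
  | mem x hx =>
    obtain ⟨p, rfl⟩ := hx
    refine tendsto_const_nhds.congr' ?_
    filter_upwards [eventually_gt_atTop (dg p.2)] with d hd
    symm
    rw [norm_eq_zero, comp_zero, sub_zero]
    apply clm_ext
    intro k
    rw [comp_apply, VV_en]
    split_ifs with hh
    · rw [EE_en, if_neg]
      · simp
      · intro e
        rw [e, dg_sn] at hd; omega
    · simp
  | zero => exact ARel.zero
  | add x y _ _ hx hy => simpa using (hx.add hy)
  | smul a x _ hx => simpa using hx.smul a
end
open Filter Topology InnerProductSpace ContinuousLinearMap
noncomputable section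

def up {n : ℕ} (k : Fin n → ℕ) (m : Fin n) : Fin n → ℕ := Function.update k m (k m + 1)

lemma dg_up {n : ℕ} (k : Fin n → ℕ) (m : Fin n) : dg (up k m) = dg k + 1 := by
  rw [dg, dg, up, Finset.sum_update_of_mem (Finset.mem_univ m),
    ← Finset.add_sum_erase _ _ (Finset.mem_univ m), Finset.sdiff_singleton_eq_erase]
  ring

lemma up_inj {n : ℕ} {k l : Fin n → ℕ} {m : Fin n} (h : up k m = up l m) : k = l := by
  funext x
  have := congrFun h x
  by_cases hx : x = m
  · subst hx; simpa [up] using this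
  · simpa [up, hx] using this

lemma up_castSucc {n : ℕ} (k : Fin n → ℕ) (a : ℕ) (m : Fin n) :
    up (sn k a) m.castSucc = sn (up k m) a := by
  simp only [up, sn, Fin.snoc_update, Fin.snoc_castSucc]

lemma up_last {n : ℕ} (k : Fin n → ℕ) (a : ℕ) :
    up (sn k a) (Fin.last n) = sn k (a + 1) := by
  simp only [up, sn, Fin.update_snoc_last, Fin.snoc_last]

lemma shiftIdx_succ {n : ℕ} (j : Fin n) : shiftIdx j.succ = (shiftIdx j).castSucc := by
  ext; simp [shiftIdx]; omega

lemma shiftIdx_zero {n : ℕ} : shiftIdx (0 : Fin (n+1)) = Fin.last n := by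
  ext; simp [shiftIdx]

lemma shiftIdx_shiftIdx {n : ℕ} (j : Fin n) : shiftIdx (shiftIdx j) = j := by
  ext; simp [shiftIdx]; omega

def wc (q : ℝ) {n : ℕ} (j : Fin n) (k : Fin n → ℕ) : ℝ :=
  (q ^ (-(∑ m ∈ Finset.univ.filter (fun m : Fin n => (m : ℕ) < n - 1 - (j : ℕ)), (k m : ℤ)))) *
          Real.sqrt (1 - q ^ (-2 * ((k (shiftIdx j) : ℤ) + 1)))

lemma q_pow {q : ℝ} (d : ℕ) : q ^ (-(d : ℤ)) = q⁻¹ ^ d := by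
  rw [zpow_neg, zpow_natCast, inv_pow]

lemma w0_en {q : ℝ} {n : ℕ} {w : Fin (n + 1) → (Hn n →L[ℂ] Hn n)} (hw : IsWFamily q w)
    (k : Fin n → ℕ) : w 0 (en k) = (((q⁻¹ ^ dg k : ℝ)) : ℂ) • en k := by
  rw [hw.1, ← q_pow, RCLike.real_smul_eq_coe_smul (K := ℂ)]
  simp [dg]

lemma wS_en {q : ℝ} {n : ℕ} {w : Fin (n + 1) → (Hn n →L[ℂ] Hn n)} (hw : IsWFamily q w)
    (j : Fin n) (k : Fin n → ℕ) :
    w j.succ (en k) = ((wc q j k : ℝ) : ℂ) • en (up k (shiftIdx j)) := by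
  rw [hw.2, RCLike.real_smul_eq_coe_smul (K := ℂ)]
  rfl

lemma sqrt_arg {q : ℝ} (a : ℕ) :
    1 - q ^ (-2 * ((a : ℤ) + 1)) = 1 - (q⁻¹ ^ (a + 1)) ^ 2 := by
  rw [← pow_mul, ← q_pow]; congr 2; push_cast; ring

lemma inv_mem {q : ℝ} (hq : 1 < q) : 0 < q⁻¹ ∧ q⁻¹ < 1 :=
  ⟨by positivity, inv_lt_one_of_one_lt₀ hq⟩

lemma wc_ne {q : ℝ} (hq : 1 < q) {n : ℕ} (j : Fin n) (k : Fin n → ℕ) : wc q j k ≠ 0 := by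
  rw [wc, sqrt_arg]
  have h := inv_mem hq
  have h1 : q⁻¹ ^ (k (shiftIdx j) + 1) < 1 := pow_lt_one₀ h.1.le h.2 (by omega)
  have h2 : 0 < q⁻¹ ^ (k (shiftIdx j) + 1) := pow_pos h.1 _
  have h3 : 0 < Real.sqrt (1 - (q⁻¹ ^ (k (shiftIdx j) + 1)) ^ 2) :=
    Real.sqrt_pos.2 (by nlinarith)
  have : 0 < q := by linarith
  positivity

lemma wc_succ {q : ℝ} {n : ℕ} (j : Fin n) (k : Fin n → ℕ) (a : ℕ) :
    wc q j.succ (sn k a) = wc q j k := by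
  rw [wc, wc, shiftIdx_succ]
  congr 3
  · rw [Finset.sum_filter, Finset.sum_filter, Fin.sum_univ_castSucc]
    have h1 : ¬ (((Fin.last n : Fin (n+1)) : ℕ) < n + 1 - 1 - (j.succ : ℕ)) := by simp
    rw [if_neg h1, add_zero]
    refine Finset.sum_congr rfl ?_
    intro m _
    have : ((m.castSucc : ℕ) < n + 1 - 1 - (j.succ : ℕ)) ↔ ((m : ℕ) < n - 1 - (j : ℕ)) := by
      simp; omega
    simp only [this, sn, Fin.snoc_castSucc]
  · simp [sn]

lemma wc_zero {q : ℝ} {n : ℕ} (k : Fin n → ℕ) (a : ℕ) :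
    wc q (0 : Fin (n+1)) (sn k a) = q⁻¹ ^ dg k * Real.sqrt (1 - (q⁻¹ ^ (a + 1)) ^ 2) := by
  rw [wc, shiftIdx_zero, sqrt_arg, ← q_pow (dg k)]
  congr 1
  · congr 2
    rw [Finset.sum_filter, Fin.sum_univ_castSucc]
    simp [sn, dg]
  · simp [sn]

lemma adj_apply {n : ℕ} (A : Hn n →L[ℂ] Hn n) (k l : Fin n → ℕ) :
    (adjoint A (en k)) l = inner ℂ (A (en l)) (en k) := by
  rw [← inner_en, adjoint_inner_right]

lemma w0_adj {q : ℝ} {n : ℕ} {w : Fin (n + 1) → (Hn n →L[ℂ] Hn n)} (hw : IsWFamily q w) :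
    adjoint (w 0) = w 0 := by
  apply clm_ext
  intro k
  ext l
  rw [adj_apply, w0_en hw, w0_en hw, inner_smul_left, inner_en_en, lp.coeFn_smul, Pi.smul_apply,
    en_apply]
  split_ifs with h
  · subst h; simp
  · simp

lemma w0_KK {q : ℝ} (hq : 1 < q) {n : ℕ} {w : Fin (n + 1) → (Hn n →L[ℂ] Hn n)}
    (hw : IsWFamily q w) : w 0 ∈ KK n := by
  have h := inv_mem hq
  have ht : Tendsto (fun M => w 0 * TT n M) atTop (𝓝 (w 0)) := by
    rw [tendsto_iff_norm_sub_tendsto_zero]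
    refine squeeze_zero (fun _ => norm_nonneg _) (fun M => ?_)
      (tendsto_pow_atTop_nhds_zero_of_lt_one h.1.le h.2)
    have e : ∀ k, (w 0 * TT n M - w 0) (en k) =
        if dg k < M then 0 else -(((q⁻¹ ^ dg k : ℝ)) : ℂ) • en k := by
      intro k
      show w 0 (TT n M (en k)) - w 0 (en k) = _
      rw [TT_en]
      split_ifs
      · simp
      · rw [w0_en hw]; simp
    apply norm_le_of_orth _ _ (pow_nonneg h.1.le _)
    · intro k l hkl
      rw [e, e]
      split_ifs <;> try simp
      simp [inner_smul_left, inner_smul_right, inner_en_en, hkl]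
    · intro k
      rw [e]
      split_ifs with hh
      · simpa using pow_nonneg h.1.le _
      · rw [norm_smul, norm_en, norm_neg, Complex.norm_real, Real.norm_of_nonneg
          (pow_nonneg h.1.le _), mul_one]
        exact pow_le_pow_of_le_one h.1.le h.2.le (by omega)
  refine (KK_closed n).mem_of_tendsto ht (Eventually.of_forall fun M => ?_)
  apply KK_mul_left
  simpa using TT_mul_mem M (1 : Hn n →L[ℂ] Hn n)

lemma gen_mem {n : ℕ} (w : Fin (n + 1) → (Hn n →L[ℂ] Hn n)) (i j : Fin (n+1)) :
    star (w i) * w j ∈ projAlg w :=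
  StarSubalgebra.le_topologicalClosure _ (StarAlgebra.subset_adjoin _ _ ⟨i, j, rfl⟩)

lemma projAlg_closed {n : ℕ} (w : Fin (n + 1) → (Hn n →L[ℂ] Hn n)) :
    IsClosed (projAlg w : Set (Hn n →L[ℂ] Hn n)) :=
  StarSubalgebra.isClosed_topologicalClosure _

lemma dg_eq_zero {n : ℕ} {k : Fin n → ℕ} : dg k = 0 ↔ k = 0 := by
  rw [dg, Finset.sum_eq_zero_iff]
  constructor
  · intro h; funext m; exact h m (Finset.mem_univ _)
  · rintro rfl; simp

lemma E00_mem {q : ℝ} (hq : 1 < q) {n : ℕ} {w : Fin (n + 1) → (Hn n →L[ℂ] Hn n)}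
    (hw : IsWFamily q w) : EE (0 : Fin n → ℕ) (0 : Fin n → ℕ) ∈ projAlg w := by
  have h := inv_mem hq
  set r := q⁻¹ with hr
  have hp : ∀ M k, ((star (w 0) * w 0) ^ M) (en k) = ((((r ^ dg k) ^ 2) ^ M : ℝ) : ℂ) • en k := by
    intro M k
    induction M with
    | zero => simp
    | succ M ih =>
      rw [pow_succ']
      show (star (w 0)) (w 0 (((star (w 0) * w 0) ^ M) (en k))) = _
      rw [ih, star_eq_adjoint, w0_adj hw, map_smul, map_smul, w0_en hw, map_smul, w0_en hw,
        smul_smul, smul_smul, ← hr]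
      congr 1
      push_cast
      ring
  have ht : Tendsto (fun M => (star (w 0) * w 0) ^ M) atTop
      (𝓝 (EE (0 : Fin n → ℕ) (0 : Fin n → ℕ))) := by
    rw [tendsto_iff_norm_sub_tendsto_zero]
    refine squeeze_zero (fun _ => norm_nonneg _) (fun M => ?_)
      (tendsto_pow_atTop_nhds_zero_of_lt_one h.1.le h.2)
    have e : ∀ k, ((star (w 0) * w 0) ^ M - EE (0 : Fin n → ℕ) (0 : Fin n → ℕ)) (en k) =
        if k = 0 then 0 else ((((r ^ dg k) ^ 2) ^ M : ℝ) : ℂ) • en k := by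
      intro k
      rw [sub_apply, hp, EE_en]
      split_ifs with h1 h2 h2
      · subst h1; simp [dg]
      · exact absurd h1.symm h2
      · exact absurd h2.symm h1
      · simp
    apply norm_le_of_orth _ _ (pow_nonneg h.1.le _)
    · intro k l hkl
      rw [e, e]
      split_ifs <;> try simp
      simp [inner_smul_left, inner_smul_right, inner_en_en, hkl]
    · intro k
      rw [e]
      split_ifs with hh
      · simpa using pow_nonneg h.1.le _
      · rw [← dg_eq_zero] at hh
        rw [norm_smul, norm_en, Complex.norm_real, Real.norm_of_nonneg
          (by have := h.1; positivity), mul_one]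
        apply pow_le_pow_left₀ (by have := h.1; positivity)
        rw [← pow_mul]
        exact pow_le_of_le_one h.1.le h.2.le (by omega)
  exact (projAlg_closed w).mem_of_tendsto ht
    (Eventually.of_forall fun M => pow_mem (gen_mem w 0 0) M)

lemma exists_up {n : ℕ} {k : Fin n → ℕ} (h : dg k ≠ 0) : ∃ l m, k = up l m := by
  have : ∃ m, k m ≠ 0 := by
    by_contra hh
    push Not at hh
    exact h (dg_eq_zero.2 (funext hh))
  obtain ⟨m, hm⟩ := this
  refine ⟨Function.update k m (k m - 1), m, ?_⟩
  funext x
  by_cases hx : x = m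
  · subst hx; simp [up]; omega
  · simp [up, hx]

lemma Ek0_mem {q : ℝ} (hq : 1 < q) {n : ℕ} {w : Fin (n + 1) → (Hn n →L[ℂ] Hn n)}
    (hw : IsWFamily q w) (d : ℕ) : ∀ k : Fin n → ℕ, dg k = d →
      EE k (0 : Fin n → ℕ) ∈ projAlg w := by
  have h := inv_mem hq
  induction d with
  | zero =>
    intro k hk
    rw [dg_eq_zero] at hk
    subst hk; exact E00_mem hq hw
  | succ d ih =>
    intro k hk
    obtain ⟨l, m, rfl⟩ := exists_up (k := k) (by omega)
    have hl : dg l = d := by rw [dg_up] at hk; omega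
    have h1 := mul_mem (gen_mem w 0 (shiftIdx m).succ) (ih l hl)
    set c : ℂ := ((wc q (shiftIdx m) l : ℝ) : ℂ) * ((q⁻¹ ^ dg (up l m) : ℝ) : ℂ) with hc
    have hc0 : c ≠ 0 := by
      rw [hc]
      apply mul_ne_zero
      · exact_mod_cast wc_ne hq _ _
      · exact_mod_cast (pow_pos h.1 _).ne'
    have e : star (w 0) * w (shiftIdx m).succ * EE l (0 : Fin n → ℕ) = c • EE (up l m) 0 := by
      apply clm_ext
      intro k
      show (star (w 0)) (w (shiftIdx m).succ (EE l 0 (en k))) = c • (EE (up l m) 0 (en k))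
      rw [EE_en, EE_en]
      split_ifs
      · rw [wS_en hw, shiftIdx_shiftIdx, map_smul, star_eq_adjoint, w0_adj hw, w0_en hw, smul_smul]
      · simp
    rw [e] at h1
    have h2 := (projAlg w).smul_mem h1 c⁻¹
    rwa [smul_smul, inv_mul_cancel₀ hc0, one_smul] at h2

lemma KK_le {q : ℝ} (hq : 1 < q) {n : ℕ} {w : Fin (n + 1) → (Hn n →L[ℂ] Hn n)}
    (hw : IsWFamily q w) {T : Hn n →L[ℂ] Hn n} (hT : T ∈ KK n) : T ∈ projAlg w := by
  have h1 : KS n ≤ Subalgebra.toSubmodule (projAlg w).toSubalgebra := by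
    rw [KS, Submodule.span_le]
    rintro _ ⟨⟨k, l⟩, rfl⟩
    have a := Ek0_mem hq hw _ k rfl
    have b := star_mem (Ek0_mem hq hw _ l rfl)
    have e : EE k l = EE k (0 : Fin n → ℕ) * star (EE l (0 : Fin n → ℕ)) := by
      rw [star_eq_adjoint, EE_adj]
      apply clm_ext
      intro j
      show _ = EE k 0 (EE 0 l (en j))
      rw [EE_en, EE_en]
      split_ifs
      · rw [EE_en, if_pos rfl]
      · simp
    show EE k l ∈ projAlg w
    rw [e]; exact mul_mem a b
  exact Submodule.topologicalClosure_minimal _ h1 (projAlg_closed w) hT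

lemma QQ_w {q : ℝ} {n : ℕ} {w : Fin (n + 1) → (Hn n →L[ℂ] Hn n)} (hw : IsWFamily q w)
    (i : Fin n) (d : ℕ) : QQ n (d+1) * w i.succ = w i.succ * QQ n d := by
  apply clm_ext
  intro k
  show QQ n (d+1) (w i.succ (en k)) = w i.succ (QQ n d (en k))
  rw [QQ_en, wS_en hw, map_smul, QQ_en, dg_up]
  split_ifs with h1 h2 h2
  · rw [wS_en hw]
  · omega
  · omega
  · simp

lemma one_sub_sqrt {t : ℝ} (h0 : 0 ≤ t) (h1 : t ≤ 1) : |Real.sqrt (1 - t ^ 2) - 1| ≤ t := by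
  have a : Real.sqrt (1 - t ^ 2) ≤ 1 := Real.sqrt_le_one.2 (by nlinarith)
  have b : 1 - t ≤ Real.sqrt (1 - t ^ 2) := Real.le_sqrt_of_sq_le (by nlinarith)
  rw [abs_le]; constructor <;> linarith


lemma inter1 {n : ℕ} {q : ℝ} (hq : 1 < q)
    {w : Fin (n + 2) → (Hn (n + 1) →L[ℂ] Hn (n + 1))}
    {w' : Fin (n + 1) → (Hn n →L[ℂ] Hn n)}
    (hw : IsWFamily q w) (hw' : IsWFamily q w')
    (i : Fin (n+1)) (d : ℕ) :
    ‖w i.succ ∘L VV n d - VV n (d+1) ∘L w' i‖ ≤ q⁻¹ ^ (d+1) := by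
  have h := inv_mem hq
  refine Fin.cases ?_ (fun j => ?_) i
  · have e : ∀ k, (w (Fin.succ 0) ∘L VV n d - VV n (d+1) ∘L w' 0) (en k) =
        (((if dg k ≤ d then q⁻¹ ^ dg k * Real.sqrt (1 - (q⁻¹ ^ (d - dg k + 1)) ^ 2)
            - q⁻¹ ^ dg k else
          if dg k = d + 1 then - q⁻¹ ^ (d + 1) else 0 : ℝ)) : ℂ) • en (sn k (d + 1 - dg k)) := by
      intro k
      show w (Fin.succ 0) (VV n d (en k)) - VV n (d+1) (w' 0 (en k)) = _
      rw [w0_en hw', map_smul, VV_en, VV_en]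
      by_cases h1 : dg k ≤ d
      · rw [if_pos h1, if_pos h1, if_pos (by omega), wS_en hw, wc_zero, shiftIdx_zero, up_last,
          show d - dg k + 1 = d + 1 - dg k by omega, ← sub_smul]
        push_cast; rfl
      · rw [if_neg h1, if_neg h1]
        by_cases h2 : dg k = d + 1
        · rw [if_pos (by omega), if_pos h2, h2]; simp
        · rw [if_neg (by omega), if_neg h2]; simp
    apply norm_le_of_orth _ _ (pow_nonneg h.1.le _)
    · intro k l hkl
      rw [e, e, inner_smul_left, inner_smul_right, inner_en_en,
        if_neg (fun hh => hkl (sn_inj hh).1)]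
      simp
    · intro k
      rw [e, norm_smul, norm_en, mul_one, Complex.norm_real, Real.norm_eq_abs]
      split_ifs with h1 h2
      · have e2 : q⁻¹ ^ (d + 1) = q⁻¹ ^ dg k * q⁻¹ ^ (d - dg k + 1) := by
          rw [← pow_add]; congr 1; omega
        rw [e2, ← mul_sub_one, abs_mul, abs_of_nonneg (pow_nonneg h.1.le _)]
        apply mul_le_mul_of_nonneg_left _ (pow_nonneg h.1.le _)
        exact one_sub_sqrt (pow_nonneg h.1.le _) (pow_le_one₀ h.1.le h.2.le)
      · rw [abs_neg, abs_of_nonneg (pow_nonneg h.1.le _)]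
      · simpa using pow_nonneg h.1.le _
  · have : w j.succ.succ ∘L VV n d - VV n (d+1) ∘L w' j.succ = 0 := by
      rw [sub_eq_zero]
      apply clm_ext
      intro k
      show w j.succ.succ (VV n d (en k)) = VV n (d+1) (w' j.succ (en k))
      rw [wS_en hw', map_smul, VV_en, VV_en, dg_up]
      by_cases h1 : dg k ≤ d
      · rw [if_pos h1, if_pos (by omega), wS_en hw, wc_succ, shiftIdx_succ, up_castSucc]
        congr 3; omega
      · rw [if_neg h1, if_neg (by omega)]; simp
    rw [this, norm_zero]
    exact pow_nonneg h.1.le _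

lemma inter2 {n : ℕ} {q : ℝ} (hq : 1 < q)
    {w : Fin (n + 2) → (Hn (n + 1) →L[ℂ] Hn (n + 1))}
    {w' : Fin (n + 1) → (Hn n →L[ℂ] Hn n)}
    (hw : IsWFamily q w) (hw' : IsWFamily q w')
    (i : Fin (n+1)) (d : ℕ) :
    ‖adjoint (VV n (d+1)) ∘L w i.succ - w' i ∘L adjoint (VV n d)‖ ≤ q⁻¹ ^ (d+1) := by
  have a1 : adjoint (VV n (d+1)) ∘L QQ (n+1) (d+1) = adjoint (VV n (d+1)) := by
    apply clm_ext; intro k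
    rw [comp_apply, QQ_en]
    split_ifs with h
    · rfl
    · rw [VVadj_en, if_neg h]; simp
  have a2 : TT n (d+2) ∘L (w' i ∘L adjoint (VV n d)) = w' i ∘L adjoint (VV n d) := by
    apply clm_ext; intro k
    rw [comp_apply, comp_apply, VVadj_en]
    split_ifs with h
    · have := dg_init k
      refine Fin.cases ?_ (fun j => ?_) i
      · rw [w0_en hw', map_smul, TT_en, if_pos (by omega)]
      · rw [wS_en hw', map_smul, TT_en, if_pos (by rw [dg_up]; omega)]
    · simp
  have e : adjoint (VV n (d+1)) ∘L w i.succ - w' i ∘L adjoint (VV n d) =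
      adjoint (VV n (d+1)) ∘L (w i.succ ∘L VV n d - VV n (d+1) ∘L w' i) ∘L adjoint (VV n d) := by
    rw [sub_comp, comp_sub]
    congr 1
    · rw [comp_assoc, QQ_eq]
      have := QQ_w hw i d
      rw [mul_def, mul_def] at this
      rw [← this, ← comp_assoc, a1]
    · rw [← comp_assoc, ← comp_assoc, VadjV, comp_assoc, a2]
  rw [e]
  refine (opNorm_comp_le _ _).trans ?_
  have h1 := VVadj_norm n (d+1)
  have h2 := VVadj_norm n d
  have h3 := inter1 hq hw hw' i d
  have h4 := opNorm_comp_le (w i.succ ∘L VV n d - VV n (d+1) ∘L w' i) (adjoint (VV n d))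
  have h5 : ‖(w i.succ ∘L VV n d - VV n (d+1) ∘L w' i) ∘L adjoint (VV n d)‖ ≤ q⁻¹ ^ (d+1) := by
    refine h4.trans (le_trans ?_ h3)
    exact mul_le_of_le_one_right (norm_nonneg _) h2
  exact (mul_le_of_le_one_left (norm_nonneg _) h1).trans h5

lemma inter3 {n : ℕ} {q : ℝ} (hq : 1 < q)
    {w : Fin (n + 2) → (Hn (n + 1) →L[ℂ] Hn (n + 1))}
    {w' : Fin (n + 1) → (Hn n →L[ℂ] Hn n)}
    (hw : IsWFamily q w) (hw' : IsWFamily q w')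
    (i : Fin (n+1)) (d : ℕ) :
    ‖star (w i.succ) ∘L VV n (d+1) - VV n d ∘L star (w' i)‖ ≤ q⁻¹ ^ (d+1) := by
  have := inter2 hq hw hw' i d
  rw [← LinearIsometryEquiv.norm_map adjoint, map_sub, adjoint_comp, adjoint_comp,
    adjoint_adjoint, adjoint_adjoint] at this
  exact this

lemma rel_gen {n : ℕ} {q : ℝ} (hq : 1 < q)
    {w : Fin (n + 2) → (Hn (n + 1) →L[ℂ] Hn (n + 1))}
    {w' : Fin (n + 1) → (Hn n →L[ℂ] Hn n)}
    (hw : IsWFamily q w) (hw' : IsWFamily q w')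
    (i j : Fin (n+1)) :
    ARel (star (w i.succ) * w j.succ) (star (w' i) * w' j) := by
  have h := inv_mem hq
  refine ARel.of_bound (f := fun d => ‖star (w i.succ)‖ * q⁻¹ ^ (d+1) + q⁻¹ ^ (d+1) * ‖w' j‖)
    (fun d => ?_) ?_
  · have e : (star (w i.succ) * w j.succ) ∘L VV n d - VV n d ∘L (star (w' i) * w' j) =
        star (w i.succ) ∘L (w j.succ ∘L VV n d - VV n (d+1) ∘L w' j) +
        (star (w i.succ) ∘L VV n (d+1) - VV n d ∘L star (w' i)) ∘L w' j := by
      rw [comp_sub, sub_comp, mul_def, mul_def]; simp only [comp_assoc]; abel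
    rw [e]
    refine (norm_add_le _ _).trans (add_le_add ?_ ?_)
    · exact (opNorm_comp_le _ _).trans
        (mul_le_mul_of_nonneg_left (inter1 hq hw hw' j d) (norm_nonneg _))
    · exact (opNorm_comp_le _ _).trans
        (mul_le_mul_of_nonneg_right (inter3 hq hw hw' i d) (norm_nonneg _))
  · have ht : Tendsto (fun d : ℕ => q⁻¹ ^ (d+1)) atTop (𝓝 0) :=
      (tendsto_pow_atTop_nhds_zero_of_lt_one h.1.le h.2).comp (tendsto_add_atTop_nat 1)
    simpa using (ht.const_mul ‖star (w i.succ)‖).add (ht.mul_const ‖w' j‖)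
end
open Filter Topology InnerProductSpace ContinuousLinearMap
noncomputable section

/-- block diagonal plus compact -/
def DK (n : ℕ) : StarSubalgebra ℂ (Hn n →L[ℂ] Hn n) where
  carrier := {x | ∃ D K, x = D + K ∧ (∀ d, D * QQ n d = QQ n d * D) ∧ K ∈ KK n}
  mul_mem' := by
    rintro _ _ ⟨D, K, rfl, hD, hK⟩ ⟨D', K', rfl, hD', hK'⟩
    refine ⟨D * D', D * K' + K * (D' + K'), by noncomm_ring, fun d => ?_, ?_⟩
    · rw [mul_assoc, hD', ← mul_assoc, hD, mul_assoc]
    · exact Submodule.add_mem _ (KK_mul_left hK' _) (KK_mul_right hK _)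
  add_mem' := by
    rintro _ _ ⟨D, K, rfl, hD, hK⟩ ⟨D', K', rfl, hD', hK'⟩
    refine ⟨D + D', K + K', by abel, fun d => ?_, Submodule.add_mem _ hK hK'⟩
    rw [add_mul, mul_add, hD, hD']
  algebraMap_mem' := by
    intro c
    refine ⟨algebraMap ℂ _ c, 0, by simp, fun d => ?_, Submodule.zero_mem _⟩
    exact Algebra.commutes c _
  star_mem' := by
    rintro _ ⟨D, K, rfl, hD, hK⟩
    refine ⟨star D, star K, star_add _ _, fun d => ?_, KK_star hK⟩
    have := congrArg star (hD d)
    rw [star_mul, star_mul, star_eq_adjoint (QQ n d), QQ_adj] at this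
    exact this.symm

lemma gen_KK_left {q : ℝ} (hq : 1 < q) {n : ℕ} {w : Fin (n + 1) → (Hn n →L[ℂ] Hn n)}
    (hw : IsWFamily q w) (j : Fin (n+1)) : star (w 0) * w j ∈ KK n :=
  KK_mul_right (KK_star (w0_KK hq hw)) _

lemma gen_KK_right {q : ℝ} (hq : 1 < q) {n : ℕ} {w : Fin (n + 1) → (Hn n →L[ℂ] Hn n)}
    (hw : IsWFamily q w) (j : Fin (n+1)) : star (w j) * w 0 ∈ KK n :=
  KK_mul_left (w0_KK hq hw) _

lemma adjoin_le_DK {q : ℝ} (hq : 1 < q) {n : ℕ} {w : Fin (n + 1) → (Hn n →L[ℂ] Hn n)}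
    (hw : IsWFamily q w) :
    StarAlgebra.adjoin ℂ {x : Hn n →L[ℂ] Hn n | ∃ i j : Fin (n + 1), x = star (w i) * w j}
      ≤ DK n := by
  apply StarAlgebra.adjoin_le
  rintro _ ⟨i, j, rfl⟩
  have hKK : ∀ x ∈ KK n, x ∈ DK n := fun x hx => ⟨0, x, by simp, by simp, hx⟩
  refine Fin.cases ?_ (fun i => ?_) i
  · exact hKK _ (gen_KK_left hq hw j)
  refine Fin.cases ?_ (fun j => ?_) j
  · exact hKK _ (gen_KK_right hq hw _)
  refine ⟨star (w i.succ) * w j.succ, 0, by simp, fun d => ?_, Submodule.zero_mem _⟩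
  have h1 := QQ_w hw j d
  have h2 := congrArg star (QQ_w hw i d)
  rw [star_mul, star_mul, star_eq_adjoint (QQ n _), star_eq_adjoint (QQ n _), QQ_adj, QQ_adj] at h2
  rw [mul_assoc, ← h1, ← mul_assoc, h2, mul_assoc]

/-- the domain of the symbol map -/
def SD {n : ℕ} (w' : Fin (n + 1) → (Hn n →L[ℂ] Hn n)) :
    StarSubalgebra ℂ (Hn (n+1) →L[ℂ] Hn (n+1)) where
  carrier := {x | ∃ y ∈ projAlg w', ARel x y ∧ ARel (star x) (star y)}
  mul_mem' := by
    rintro x x' ⟨y, hy, h1, h2⟩ ⟨y', hy', h1', h2'⟩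
    refine ⟨y * y', mul_mem hy hy', h1.mul h1', ?_⟩
    rw [star_mul, star_mul]; exact h2'.mul h2
  add_mem' := by
    rintro x x' ⟨y, hy, h1, h2⟩ ⟨y', hy', h1', h2'⟩
    refine ⟨y + y', add_mem hy hy', h1.add h1', ?_⟩
    rw [star_add, star_add]; exact h2.add h2'
  algebraMap_mem' := by
    intro c
    refine ⟨algebraMap ℂ _ c, algebraMap_mem _ _, ?_, ?_⟩
    · rw [Algebra.algebraMap_eq_smul_one, Algebra.algebraMap_eq_smul_one]
      exact ARel.one.smul c
    · rw [Algebra.algebraMap_eq_smul_one, Algebra.algebraMap_eq_smul_one, star_smul, star_smul,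
        star_one, star_one]
      exact ARel.one.smul _
  star_mem' := by
    rintro x ⟨y, hy, h1, h2⟩
    refine ⟨star y, star_mem hy, h2, ?_⟩
    rw [star_star, star_star]; exact h1

lemma SD_closed {n : ℕ} (w' : Fin (n + 1) → (Hn n →L[ℂ] Hn n)) :
    IsClosed (SD w' : Set (Hn (n+1) →L[ℂ] Hn (n+1))) := by
  rw [← isSeqClosed_iff_isClosed]
  intro x a hx ha
  choose y hy h1 h2 using hx
  have hc : CauchySeq y := by
    rw [Metric.cauchySeq_iff]
    intro ε hε
    obtain ⟨N, hN⟩ := Metric.cauchySeq_iff.1 ha.cauchySeq ε hε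
    refine ⟨N, fun m hm k hk => lt_of_le_of_lt ?_ (hN m hm k hk)⟩
    rw [dist_eq_norm, dist_eq_norm]
    exact ((h1 m).sub (h1 k)).norm_le
  obtain ⟨b, hb⟩ := cauchySeq_tendsto_of_complete hc
  refine ⟨b, (projAlg_closed w').mem_of_tendsto hb (Eventually.of_forall hy), ?_, ?_⟩
  · apply rel_of_approx
    intro ε hε
    obtain ⟨N, hN⟩ := ((Metric.tendsto_nhds.1 ha ε hε).and (Metric.tendsto_nhds.1 hb ε hε)).exists
    refine ⟨x N, y N, ?_, ?_, h1 N⟩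
    · rw [← dist_eq_norm, dist_comm]; exact hN.1.le
    · rw [← dist_eq_norm, dist_comm]; exact hN.2.le
  · apply rel_of_approx
    intro ε hε
    obtain ⟨N, hN⟩ := ((Metric.tendsto_nhds.1 ha ε hε).and (Metric.tendsto_nhds.1 hb ε hε)).exists
    refine ⟨star (x N), star (y N), ?_, ?_, h2 N⟩
    · rw [← star_sub, norm_star, ← dist_eq_norm, dist_comm]; exact hN.1.le
    · rw [← star_sub, norm_star, ← dist_eq_norm, dist_comm]; exact hN.2.le

lemma projAlg_le_SD {n : ℕ} {q : ℝ} (hq : 1 < q)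
    {w : Fin (n + 2) → (Hn (n + 1) →L[ℂ] Hn (n + 1))}
    {w' : Fin (n + 1) → (Hn n →L[ℂ] Hn n)}
    (hw : IsWFamily q w) (hw' : IsWFamily q w') : projAlg w ≤ SD w' := by
  apply StarSubalgebra.topologicalClosure_minimal _ (SD_closed w')
  apply StarAlgebra.adjoin_le
  rintro _ ⟨i, j, rfl⟩
  have hKK : ∀ x ∈ KK (n+1), x ∈ SD w' := fun x hx =>
    ⟨0, zero_mem _, KK_rel hx, by rw [star_zero]; exact KK_rel (KK_star hx)⟩
  refine Fin.cases ?_ (fun i => ?_) i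
  · exact hKK _ (gen_KK_left hq hw j)
  refine Fin.cases ?_ (fun j => ?_) j
  · exact hKK _ (gen_KK_right hq hw _)
  refine ⟨star (w' i) * w' j, gen_mem w' i j, rel_gen hq hw hw' i j, ?_⟩
  rw [star_mul, star_mul, star_star, star_star]
  exact rel_gen hq hw hw' j i

lemma exists_lift {n : ℕ} {q : ℝ} (hq : 1 < q)
    {w : Fin (n + 2) → (Hn (n + 1) →L[ℂ] Hn (n + 1))} (hw : IsWFamily q w)
    {x : Hn (n+1) →L[ℂ] Hn (n+1)} (hx : x ∈ projAlg w) {y : Hn n →L[ℂ] Hn n}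
    (hxy : ARel x y) {ε : ℝ} (hε : 0 < ε) : ∃ K ∈ KK (n+1), ‖x - K‖ ≤ ‖y‖ + ε := by
  obtain ⟨a, ha, hxa⟩ := Metric.mem_closure_iff.1 (show x ∈ closure _ from hx) (ε/4) (by positivity)
  obtain ⟨D, K, rfl, hD, hK⟩ := adjoin_le_DK hq hw ha
  rw [dist_eq_norm] at hxa
  have e1 := (Metric.tendsto_nhds.1 hxy (ε/4) (by positivity))
  have e2 := (Metric.tendsto_nhds.1 (KK_rel hK) (ε/4) (by positivity))
  obtain ⟨m, hm⟩ := eventually_atTop.1 (e1.and e2)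
  have hb : ∀ d, m ≤ d → ‖D * QQ (n+1) d‖ ≤ ‖y‖ + 3 * ε / 4 := by
    intro d hd
    obtain ⟨f1, f2⟩ := hm d hd
    rw [Real.dist_0_eq_abs, abs_norm] at f1 f2
    rw [comp_zero, sub_zero] at f2
    have g1 : D ∘L VV n d = (x ∘L VV n d - VV n d ∘L y) + VV n d ∘L y -
        (x - (D + K)) ∘L VV n d - K ∘L VV n d := by
      rw [sub_comp, add_comp]; abel
    have g2 : ‖VV n d ∘L y‖ ≤ ‖y‖ :=
      (opNorm_comp_le _ _).trans (mul_le_of_le_one_left (norm_nonneg _) (VV_norm n d))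
    have g3 : ‖(x - (D + K)) ∘L VV n d‖ ≤ ‖x - (D + K)‖ :=
      (opNorm_comp_le _ _).trans (mul_le_of_le_one_right (norm_nonneg _) (VV_norm n d))
    have g4 : ‖D ∘L VV n d‖ ≤ ‖y‖ + 3 * ε / 4 := by
      rw [g1]
      have k1 := norm_sub_le ((x ∘L VV n d - VV n d ∘L y) + VV n d ∘L y -
        (x - (D + K)) ∘L VV n d) (K ∘L VV n d)
      have k2 := norm_sub_le ((x ∘L VV n d - VV n d ∘L y) + VV n d ∘L y)
        ((x - (D + K)) ∘L VV n d)
      have k3 := norm_add_le (x ∘L VV n d - VV n d ∘L y) (VV n d ∘L y)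
      linarith
    rw [← QQ_eq, mul_def, ← comp_assoc]
    refine le_trans ((opNorm_comp_le _ _).trans ?_) g4
    exact mul_le_of_le_one_right (norm_nonneg _) (VVadj_norm n d)
  have hbb := block_bound D m hD _ (by positivity) hb
  refine ⟨D * TT (n+1) m + K, Submodule.add_mem _ (KK_mul_left ?_ _) hK, ?_⟩
  · simpa using TT_mul_mem m (1 : Hn (n+1) →L[ℂ] Hn (n+1))
  have e : x - (D * TT (n+1) m + K) = (x - (D + K)) + D * (1 - TT (n+1) m) := by noncomm_ring
  rw [e]
  have := norm_add_le (x - (D + K)) (D * (1 - TT (n+1) m))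
  linarith

theorem stmt_1 (n : ℕ) (q : ℝ) (hq : 1 < q)
    (w : Fin (n + 2) → (Hn (n + 1) →L[ℂ] Hn (n + 1)))
    (w' : Fin (n + 1) → (Hn n →L[ℂ] Hn n))
    (hw : IsWFamily q w) (hw' : IsWFamily q w') :
    (∀ T : Hn (n + 1) →L[ℂ] Hn (n + 1), IsCompactOperator ⇑T → T ∈ projAlg w) ∧
    ∃ φ : (projAlg w) →⋆ₐ[ℂ] (projAlg w'),
      Function.Surjective φ ∧
      ∀ x : projAlg w, φ x = 0 ↔ IsCompactOperator ⇑(x : Hn (n + 1) →L[ℂ] Hn (n + 1)) := by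
  refine ⟨fun T hT => KK_le hq hw (compact_KK hT), ?_⟩
  have hle := projAlg_le_SD hq hw hw'
  have hex : ∀ x : projAlg w, ∃ y : projAlg w',
      ARel (x : Hn (n + 1) →L[ℂ] Hn (n + 1)) (y : Hn n →L[ℂ] Hn n) ∧
      ARel (star (x : Hn (n + 1) →L[ℂ] Hn (n + 1))) (star (y : Hn n →L[ℂ] Hn n)) := by
    intro x
    obtain ⟨y, hy, h⟩ := hle x.2
    exact ⟨⟨y, hy⟩, h⟩
  choose f hf hf' using hex
  have huniq : ∀ (x : projAlg w) (y : projAlg w'),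
      ARel (x : Hn (n + 1) →L[ℂ] Hn (n + 1)) (y : Hn n →L[ℂ] Hn n) → f x = y := by
    intro x y h
    exact Subtype.ext ((hf x).unique h)
  let φ : (projAlg w) →⋆ₐ[ℂ] (projAlg w') :=
    { toFun := f
      map_one' := huniq _ _ ARel.one
      map_mul' := fun x y => huniq _ _ ((hf x).mul (hf y))
      map_zero' := huniq _ _ ARel.zero
      map_add' := fun x y => huniq _ _ ((hf x).add (hf y))
      commutes' := fun c => huniq _ _ (by
        have := (ARel.one (n := n)).smul c
        rwa [← Algebra.algebraMap_eq_smul_one, ← Algebra.algebraMap_eq_smul_one] at this)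
      map_star' := fun x => huniq _ _ (hf' x) }
  have hφ : ∀ x, φ x = f x := fun _ => rfl
  refine ⟨φ, ?_, ?_⟩
  · let g : NormedAddGroupHom (projAlg w) (Hn n →L[ℂ] Hn n) :=
      AddMonoidHom.mkNormedAddGroupHom
        (((projAlg w').subtype.toAlgHom.toLinearMap.toAddMonoidHom).comp
          (φ.toAlgHom.toLinearMap.toAddMonoidHom)) 1 (fun v => by
            rw [one_mul]; exact (hf v).norm_le)
    have hg : ∀ x, g x = (f x : Hn n →L[ℂ] Hn n) := fun _ => rfl
    have : CompleteSpace (projAlg w) := (projAlg_closed w).completeSpace_coe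
    have hs : g.SurjectiveOnWith g.range 2 := by
      intro h hh
      obtain ⟨x, rfl⟩ := (NormedAddGroupHom.mem_range _ _).1 hh
      by_cases h0 : g x = 0
      · exact ⟨0, by rw [h0]; simp, by simp⟩
      · obtain ⟨K, hK, hxK⟩ := exists_lift hq hw x.2 (hf x) (norm_pos_iff.2 h0)
        refine ⟨x - ⟨K, KK_le hq hw hK⟩, ?_, ?_⟩
        · rw [map_sub]
          have : f ⟨K, KK_le hq hw hK⟩ = 0 := huniq _ _ (KK_rel hK)
          rw [hg ⟨K, _⟩, this]; simp
        · rw [hg] at hxK ⊢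
          refine le_trans hxK ?_
          linarith
    have hs2 := controlled_closure_of_complete two_pos one_pos hs
    intro y
    have hy : (y : Hn n →L[ℂ] Hn n) ∈ g.range.topologicalClosure := by
      have hyc : (y : Hn n →L[ℂ] Hn n) ∈ closure _ := y.2
      refine closure_mono ?_ hyc
      have hle2 : StarAlgebra.adjoin ℂ
          {x : Hn n →L[ℂ] Hn n | ∃ i j : Fin (n + 1), x = star (w' i) * w' j} ≤
          ((projAlg w').subtype.comp φ).range := by
        apply StarAlgebra.adjoin_le
        rintro _ ⟨i, j, rfl⟩
        refine ⟨⟨_, gen_mem w i.succ j.succ⟩, ?_⟩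
        exact congrArg Subtype.val (huniq ⟨_, gen_mem w i.succ j.succ⟩ ⟨_, gen_mem w' i j⟩
          (rel_gen hq hw hw' i j))
      intro z hz
      obtain ⟨x, hx⟩ := hle2 hz
      exact ⟨x, hx⟩
    obtain ⟨x, hx, _⟩ := hs2 _ hy
    exact ⟨x, Subtype.ext hx⟩
  · intro x
    rw [KK_iff, hφ]
    constructor
    · intro h0
      have h1 := hf x
      rw [h0] at h1
      have : (x : Hn (n + 1) →L[ℂ] Hn (n + 1)) ∈ closure (KK (n+1) : Set _) := by
        rw [Metric.mem_closure_iff]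
        intro ε hε
        obtain ⟨K, hK, hxK⟩ := exists_lift hq hw x.2 h1 (half_pos hε)
        refine ⟨K, hK, ?_⟩
        rw [dist_eq_norm]
        refine lt_of_le_of_lt hxK ?_
        simp [hε]
      rwa [(KK_closed (n+1)).closure_eq] at this
    · intro h
      exact huniq _ _ (KK_rel h)
end
end
end
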